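/- arXiv:2308.15026 — 2 statements merged into one kernel-verified Lean document; each statement's English description precedes it below -/
import Mathlib

section
/- Let ζ ∈ (-1/2, ∞) and α ∈ (0,2]. Then the semigroup defined by p_ζ^{(α)} is strongly continuous on L²((0,∞), s^{2ζ} ds); that is, for every f ∈ L²((0,∞), s^{2ζ} ds), lim_{t → 0⁺} ∫_0^∞ |∫_0^∞ p_ζ^{(α)}(t,r,s) f(s) s^{2ζ} ds − f(r)|² r^{2ζ} dr = 0. -/
open MeasureTheory Real Set Filter

/-- Modified Bessel function of the first kind of order `ν`. -/
noncomputable def besselI (ν x : ℝ) : ℝ :=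
  ∑' k : ℕ, (x / 2) ^ (2 * (k : ℝ) + ν) / ((Nat.factorial k : ℝ) * Real.Gamma ((k : ℝ) + ν + 1))

/-- The Bessel heat kernel `p_ζ^{(2)}(t,r,s)`. -/
noncomputable def besselHeat (ζ t r s : ℝ) : ℝ :=
  (r * s) ^ ((1 : ℝ) / 2 - ζ) / (2 * t) * Real.exp (-(r ^ 2 + s ^ 2) / (4 * t)) *
    besselI (ζ - 1 / 2) (r * s / (2 * t))

/-- `σ` is a family of `α/2`-stable subordinator densities. -/
def IsStableSubordinatorDensity (α : ℝ) (σ : ℝ → ℝ → ℝ) : Prop :=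
  (∀ t, 0 < t → ∀ τ, 0 < τ → 0 ≤ σ t τ) ∧
  (∀ t, 0 < t → Measurable (σ t)) ∧
  (∀ t l : ℝ, 0 < t → 0 ≤ l →
    (∫ τ in Ioi (0 : ℝ), Real.exp (-τ * l) * σ t τ) = Real.exp (-t * l ^ (α / 2)))

/-- The `α/2`-subordinated Bessel heat kernel `p_ζ^{(α)}(t,r,s)`. -/
noncomputable def subKernel (ζ : ℝ) (σ : ℝ → ℝ → ℝ) (t r s : ℝ) : ℝ :=
  ∫ τ in Ioi (0 : ℝ), besselHeat ζ τ r s * σ t τ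

/-- `p` is the kernel `p_ζ^{(α)}` for `α ∈ (0,2]`: the Bessel heat kernel itself when `α = 2`,
and the `α/2`-subordinated kernel when `α < 2`. -/
def IsSubordinatedBesselKernel (ζ α : ℝ) (p : ℝ → ℝ → ℝ → ℝ) : Prop :=
  (α = 2 ∧ ∀ t r s : ℝ, p t r s = besselHeat ζ t r s) ∨
  (α < 2 ∧ ∃ σ : ℝ → ℝ → ℝ, IsStableSubordinatorDensity α σ ∧
    ∀ t r s : ℝ, p t r s = subKernel ζ σ t r s)

open scoped ENNReal Topology

/-- The `n`-th term of the power series expansion of the Bessel heat kernel. -/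
noncomputable def besselTerm (ζ : ℝ) (n : ℕ) (τ r s : ℝ) : ℝ :=
  Real.exp (-(r ^ 2 + s ^ 2) / (4 * τ)) * (r ^ 2 / (4 * τ)) ^ n * (s ^ 2 / (4 * τ)) ^ n /
    ((Nat.factorial n : ℝ) * Real.Gamma (n + (ζ + 1 / 2))) * (2 * (4 * τ) ^ (-(ζ + 1 / 2)))

/-- The Bessel heat kernel with values in `[0, ∞]`. -/
noncomputable def besselKer (ζ τ r s : ℝ) : ℝ≥0∞ :=
  ∑' n : ℕ, ENNReal.ofReal (besselTerm ζ n τ r s)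

/-- The measure `s ^ (2 * ζ) ds` on the half-line. -/
noncomputable def besselMeasure (ζ : ℝ) : Measure ℝ :=
  (volume.restrict (Ioi 0)).withDensity fun s => ENNReal.ofReal (s ^ (2 * ζ))

section Kernel

variable {ζ : ℝ}

lemma besselTerm_nonneg (hζ : -1 / 2 < ζ) (n : ℕ) {τ : ℝ} (hτ : 0 < τ) (r s : ℝ) :
    0 ≤ besselTerm ζ n τ r s := by
  have : 0 < Real.Gamma (n + (ζ + 1 / 2)) := Real.Gamma_pos_of_pos (by
    have : (0 : ℝ) ≤ n := n.cast_nonneg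
    linarith)
  unfold besselTerm
  positivity

lemma besselTerm_comm (n : ℕ) (τ r s : ℝ) : besselTerm ζ n τ r s = besselTerm ζ n τ s r := by
  unfold besselTerm
  rw [add_comm (r ^ 2)]
  ring

lemma besselKer_comm (τ r s : ℝ) : besselKer ζ τ r s = besselKer ζ τ s r := by
  simp only [besselKer, besselTerm_comm _ τ r s]

@[fun_prop]
lemma measurable_besselKer {X : Type*} [MeasurableSpace X] {a b c : X → ℝ} (ha : Measurable a)
    (hb : Measurable b) (hc : Measurable c) :
    Measurable fun x => besselKer ζ (a x) (b x) (c x) := by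
  unfold besselKer besselTerm
  refine Measurable.tsum fun n => ?_
  fun_prop

lemma summable_besselTerm (hζ : -1 / 2 < ζ) {τ r s : ℝ} (hτ : 0 < τ) (hr : 0 < r) (hs : 0 < s) :
    Summable fun n => besselTerm ζ n τ r s := by
  have hβ : 0 < ζ + 1 / 2 := by linarith
  have hG (n : ℕ) : 0 < Real.Gamma (n + (ζ + 1 / 2)) := Real.Gamma_pos_of_pos (by positivity)
  refine summable_of_ratio_test_tendsto_lt_one (l := 0) one_pos
    (Eventually.of_forall fun n => ?_) ?_
  · have := hG n
    unfold besselTerm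
    positivity
  · have key (n : ℕ) : ‖besselTerm ζ (n + 1) τ r s‖ / ‖besselTerm ζ n τ r s‖ =
        (r ^ 2 / (4 * τ)) * (s ^ 2 / (4 * τ)) * ((n + (ζ + 1 / 2))⁻¹ * ((n : ℝ) + 1)⁻¹) := by
      rw [Real.norm_of_nonneg (besselTerm_nonneg hζ _ hτ _ _),
        Real.norm_of_nonneg (besselTerm_nonneg hζ _ hτ _ _)]
      have h1 : Real.Gamma ((n + 1 : ℕ) + (ζ + 1 / 2)) =
          (n + (ζ + 1 / 2)) * Real.Gamma (n + (ζ + 1 / 2)) := by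
        rw [← Real.Gamma_add_one (by positivity)]
        push_cast
        ring_nf
      have := hG n
      have h2 : (0 : ℝ) < n + (ζ + 1 / 2) := by positivity
      have h3 : (0 : ℝ) < (4 * τ) ^ (-(ζ + 1 / 2)) := by positivity
      unfold besselTerm
      rw [h1, Nat.factorial_succ]
      generalize Real.Gamma (n + (ζ + 1 / 2)) = G at *
      generalize (4 * τ) ^ (-(ζ + 1 / 2)) = P at *
      generalize (n : ℝ) + (ζ + 1 / 2) = b at *
      have := Real.exp_pos (-(r ^ 2 + s ^ 2) / (4 * τ))
      generalize Real.exp (-(r ^ 2 + s ^ 2) / (4 * τ)) = E at *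
      have hx : 0 < r ^ 2 / (4 * τ) := by positivity
      have hy : 0 < s ^ 2 / (4 * τ) := by positivity
      generalize r ^ 2 / (4 * τ) = x at *
      generalize s ^ 2 / (4 * τ) = y at *
      push_cast
      field_simp
      ring
    simp only [key]
    have hA : Tendsto (fun n : ℕ => ((n : ℝ) + (ζ + 1 / 2))⁻¹) atTop (𝓝 0) :=
      tendsto_inv_atTop_zero.comp
        (tendsto_atTop_add_const_right _ _ tendsto_natCast_atTop_atTop)
    have hB : Tendsto (fun n : ℕ => ((n : ℝ) + 1)⁻¹) atTop (𝓝 0) :=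
      tendsto_inv_atTop_zero.comp
        (tendsto_atTop_add_const_right _ _ tendsto_natCast_atTop_atTop)
    simpa using (hA.mul hB).const_mul ((r ^ 2 / (4 * τ)) * (s ^ 2 / (4 * τ)))

lemma besselHeat_eq_tsum {τ r s : ℝ} (hτ : 0 < τ) (hr : 0 < r) (hs : 0 < s) :
    besselHeat ζ τ r s = ∑' n, besselTerm ζ n τ r s := by
  unfold besselHeat besselI
  rw [← tsum_mul_left]
  congr 1
  ext n
  have h1 : (n : ℝ) + (ζ - 1 / 2) + 1 = n + (ζ + 1 / 2) := by ring
  have h2 : (r * s / (2 * τ) / 2) ^ (2 * (n : ℝ) + (ζ - 1 / 2)) =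
      (r ^ 2 / (4 * τ)) ^ n * (s ^ 2 / (4 * τ)) ^ n *
        ((r * s) ^ (ζ - 1 / 2) * ((4 * τ) * (4 * τ) ^ (-(ζ + 1 / 2)))) := by
    have h3 : r * s / (2 * τ) / 2 = r * s / (4 * τ) := by
      field_simp
      norm_num
    have h4 : (4 * τ) * (4 * τ) ^ (-(ζ + 1 / 2)) = ((4 * τ) ^ (ζ - 1 / 2))⁻¹ := by
      have h5 := Real.rpow_add (x := 4 * τ) (by positivity) 1 (-(ζ + 1 / 2))
      rw [Real.rpow_one] at h5
      rw [← h5, ← Real.rpow_neg (by positivity)]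
      congr 1
      ring
    have h5 : (r * s / (4 * τ)) ^ (2 * (n : ℝ)) =
        (r ^ 2 / (4 * τ)) ^ n * (s ^ 2 / (4 * τ)) ^ n := by
      rw [Real.rpow_mul (by positivity), Real.rpow_natCast, Real.rpow_two, ← mul_pow]
      congr 1
      ring
    rw [h3, h4, Real.rpow_add (by positivity), h5,
      Real.div_rpow (z := ζ - 1 / 2) (by positivity) (by positivity)]
    ring
  have h5 : (r * s) ^ (1 / 2 - ζ) * (r * s) ^ (ζ - 1 / 2) = 1 := by
    rw [← Real.rpow_add (by positivity)]
    simp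
  rw [h1, h2]
  unfold besselTerm
  calc _ = ((r * s) ^ (1 / 2 - ζ) * (r * s) ^ (ζ - 1 / 2)) * ((4 * τ) / (2 * τ)) *
        (Real.exp (-(r ^ 2 + s ^ 2) / (4 * τ)) * ((r ^ 2 / (4 * τ)) ^ n * (s ^ 2 / (4 * τ)) ^ n) /
        ((Nat.factorial n : ℝ) * Real.Gamma (n + (ζ + 1 / 2))) * (4 * τ) ^ (-(ζ + 1 / 2))) := by
        ring
    _ = _ := by
      rw [h5, show 4 * τ / (2 * τ) = 2 by field_simp; norm_num]
      ring

lemma ofReal_besselHeat (hζ : -1 / 2 < ζ) {τ r s : ℝ} (hτ : 0 < τ) (hr : 0 < r) (hs : 0 < s) :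
    ENNReal.ofReal (besselHeat ζ τ r s) = besselKer ζ τ r s := by
  rw [besselHeat_eq_tsum hτ hr hs, besselKer, ENNReal.ofReal_tsum_of_nonneg
    (fun n => besselTerm_nonneg hζ n hτ r s) (summable_besselTerm hζ hτ hr hs)]

lemma besselHeat_nonneg (hζ : -1 / 2 < ζ) {τ r s : ℝ} (hτ : 0 < τ) (hr : 0 < r) (hs : 0 < s) :
    0 ≤ besselHeat ζ τ r s := by
  rw [besselHeat_eq_tsum hτ hr hs]
  exact tsum_nonneg fun n => besselTerm_nonneg hζ n hτ r s

lemma besselTerm_moment_eq (n j : ℕ) (τ r : ℝ) {s : ℝ} (hs : 0 < s) :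
    besselTerm ζ n τ r s * s ^ (2 * ζ) * (s ^ 2 / (4 * τ)) ^ j =
      Real.exp (-(r ^ 2 / (4 * τ))) * (r ^ 2 / (4 * τ)) ^ n * ((4 * τ) ^ (n + j))⁻¹ /
        ((Nat.factorial n : ℝ) * Real.Gamma (n + (ζ + 1 / 2))) * (2 * (4 * τ) ^ (-(ζ + 1 / 2))) *
        (s ^ (2 * ((n : ℝ) + ζ + j)) * Real.exp (-(4 * τ)⁻¹ * s ^ (2 : ℝ))) := by
  have h1 : s ^ (2 * ((n : ℝ) + ζ + j)) = (s ^ 2) ^ (n + j) * s ^ (2 * ζ) := by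
    rw [← Real.rpow_natCast (s ^ 2), ← Real.rpow_two, ← Real.rpow_mul hs.le, ← Real.rpow_add hs]
    congr 1
    push_cast
    ring
  have h2 : Real.exp (-(r ^ 2 + s ^ 2) / (4 * τ)) =
      Real.exp (-(r ^ 2 / (4 * τ))) * Real.exp (-(4 * τ)⁻¹ * s ^ 2) := by
    rw [← Real.exp_add]
    congr 1
    ring
  rw [h1, Real.rpow_two, besselTerm, h2, div_pow (s ^ 2), div_pow (s ^ 2), pow_add, pow_add]
  ring

lemma integrableOn_besselTerm_moment (hζ : -1 / 2 < ζ) (n j : ℕ) {τ : ℝ} (hτ : 0 < τ) (r : ℝ) :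
    IntegrableOn (fun s => besselTerm ζ n τ r s * s ^ (2 * ζ) * (s ^ 2 / (4 * τ)) ^ j)
      (Ioi 0) := by
  refine IntegrableOn.congr_fun (Integrable.const_mul (integrableOn_rpow_mul_exp_neg_mul_rpow
    (s := 2 * ((n : ℝ) + ζ + j)) (p := 2) (b := (4 * τ)⁻¹) ?_ two_pos (by positivity)) _)
    (fun s hs => (besselTerm_moment_eq n j τ r hs).symm) measurableSet_Ioi
  have : (0 : ℝ) ≤ n := n.cast_nonneg
  have : (0 : ℝ) ≤ j := j.cast_nonneg
  linarith

lemma integral_besselTerm_moment (hζ : -1 / 2 < ζ) (n j : ℕ) {τ : ℝ} (hτ : 0 < τ) (r : ℝ) :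
    ∫ s in Ioi 0, besselTerm ζ n τ r s * s ^ (2 * ζ) * (s ^ 2 / (4 * τ)) ^ j =
      Real.exp (-(r ^ 2 / (4 * τ))) * ((r ^ 2 / (4 * τ)) ^ n / (Nat.factorial n : ℝ)) *
        (Real.Gamma (n + (ζ + 1 / 2) + j) / Real.Gamma (n + (ζ + 1 / 2))) := by
  have h1 : (-1 : ℝ) < 2 * ((n : ℝ) + ζ + j) := by
    have : (0 : ℝ) ≤ n := n.cast_nonneg
    have : (0 : ℝ) ≤ j := j.cast_nonneg
    linarith
  rw [setIntegral_congr_fun measurableSet_Ioi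
    (fun s hs => besselTerm_moment_eq n j τ r hs), integral_const_mul,
    integral_rpow_mul_exp_neg_mul_rpow two_pos h1 (by positivity)]
  have h2 : (2 * ((n : ℝ) + ζ + j) + 1) / 2 = n + (ζ + 1 / 2) + j := by ring
  have h3 : ((4 * τ)⁻¹ : ℝ) ^ (-(2 * ((n : ℝ) + ζ + j) + 1) / 2) =
      (4 * τ) ^ (n + j) * ((4 * τ) ^ (-(ζ + 1 / 2)))⁻¹ := by
    rw [← Real.rpow_neg (by positivity), Real.inv_rpow (by positivity),
      ← Real.rpow_neg (by positivity), ← Real.rpow_natCast, ← Real.rpow_add (by positivity)]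
    congr 1
    push_cast
    ring
  rw [h2, h3]
  have h4 : (0 : ℝ) < (4 * τ) ^ (-(ζ + 1 / 2)) := by positivity
  generalize (4 * τ) ^ (-(ζ + 1 / 2)) = P at *
  generalize Real.Gamma (n + (ζ + 1 / 2) + j) = G
  generalize Real.Gamma (n + (ζ + 1 / 2)) = H
  have h5 : (0 : ℝ) < (4 * τ) ^ (n + j) := by positivity
  generalize (4 * τ) ^ (n + j) = Q at *
  field_simp

lemma hasSum_exp_neg_mul_pow_div_factorial (x : ℝ) :
    HasSum (fun n : ℕ => Real.exp (-x) * (x ^ n / (Nat.factorial n : ℝ))) 1 := by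
  have := (NormedSpace.expSeries_div_hasSum_exp x).mul_left (Real.exp (-x))
  rwa [← Real.exp_eq_exp_ℝ, ← Real.exp_add, neg_add_cancel, Real.exp_zero] at this

lemma hasSum_poisson_variance (x b : ℝ) :
    HasSum (fun n : ℕ => Real.exp (-x) * (x ^ n / (Nat.factorial n : ℝ)) *
      ((n + b) * (n + b + 1) - 2 * x * (n + b) + x ^ 2)) (2 * x + b ^ 2 + b) := by
  have h0 := hasSum_exp_neg_mul_pow_div_factorial x
  have h1 : HasSum (fun n : ℕ => Real.exp (-x) * (x ^ n / (Nat.factorial n : ℝ)) * n) x := by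
    rw [← hasSum_nat_add_iff' 1]
    convert! h0.mul_left x using 1
    · ext n
      rw [Nat.factorial_succ]
      push_cast
      field_simp
      ring
    · simp
  have h2 : HasSum (fun n : ℕ => Real.exp (-x) * (x ^ n / (Nat.factorial n : ℝ)) *
      (n * (n - 1))) (x ^ 2) := by
    rw [← hasSum_nat_add_iff' 1]
    convert! h1.mul_left x using 1
    · ext n
      rw [Nat.factorial_succ]
      push_cast
      field_simp
      ring
    · simp [sq]
  convert! (h2.add (h1.mul_left (2 * b + 2 - 2 * x))).add
    (h0.mul_left (b ^ 2 + b - 2 * x * b + x ^ 2)) using 1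
  · ext n
    ring
  · ring

lemma lintegral_besselMeasure {h : ℝ → ℝ≥0∞} (hh : Measurable h) :
    ∫⁻ s, h s ∂(besselMeasure ζ) = ∫⁻ s in Ioi 0, ENNReal.ofReal (s ^ (2 * ζ)) * h s := by
  rw [besselMeasure, lintegral_withDensity_eq_lintegral_mul _ (by fun_prop) hh]
  rfl

lemma lintegral_besselKer_mul (hζ : -1 / 2 < ζ) {τ : ℝ} (hτ : 0 < τ) (r : ℝ) {h : ℝ → ℝ}
    (hh : Measurable h) (h0 : ∀ s, 0 ≤ h s) {a : ℕ → ℝ} {A : ℝ}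
    (hi : ∀ n, IntegrableOn (fun s => besselTerm ζ n τ r s * s ^ (2 * ζ) * h s) (Ioi 0))
    (ha : ∀ n, ∫ s in Ioi 0, besselTerm ζ n τ r s * s ^ (2 * ζ) * h s = a n) (hA : HasSum a A) :
    ∫⁻ s, besselKer ζ τ r s * ENNReal.ofReal (h s) ∂(besselMeasure ζ) = ENNReal.ofReal A := by
  have hpos (n : ℕ) (s : ℝ) (hs : s ∈ Ioi (0 : ℝ)) :
      0 ≤ besselTerm ζ n τ r s * s ^ (2 * ζ) * h s :=
    mul_nonneg (mul_nonneg (besselTerm_nonneg hζ n hτ r s) (Real.rpow_nonneg (le_of_lt hs) _))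
      (h0 s)
  have ha0 (n : ℕ) : 0 ≤ a n := ha n ▸ setIntegral_nonneg measurableSet_Ioi (hpos n)
  rw [lintegral_besselMeasure (by fun_prop), ← hA.tsum_eq,
    ENNReal.ofReal_tsum_of_nonneg ha0 hA.summable]
  calc _ = ∫⁻ s in Ioi 0, ∑' n,
        ENNReal.ofReal (besselTerm ζ n τ r s * s ^ (2 * ζ) * h s) := by
        refine setLIntegral_congr_fun measurableSet_Ioi fun s hs => ?_
        have hs' : 0 ≤ s ^ (2 * ζ) := Real.rpow_nonneg (le_of_lt hs) _
        simp only [besselKer]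
        rw [← ENNReal.tsum_mul_right, ← ENNReal.tsum_mul_left]
        congr 1
        ext n
        rw [ENNReal.ofReal_mul' (h0 s), ENNReal.ofReal_mul' hs']
        ring
    _ = ∑' n, ∫⁻ s in Ioi 0, ENNReal.ofReal (besselTerm ζ n τ r s * s ^ (2 * ζ) * h s) := by
        refine lintegral_tsum fun n => Measurable.aemeasurable ?_
        unfold besselTerm
        fun_prop
    _ = _ := by
        congr 1
        ext n
        rw [← ha n, ofReal_integral_eq_lintegral_ofReal (hi n)
          (ae_restrict_of_forall_mem measurableSet_Ioi (hpos n))]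

lemma lintegral_besselKer (hζ : -1 / 2 < ζ) {τ : ℝ} (hτ : 0 < τ) (r : ℝ) :
    ∫⁻ s, besselKer ζ τ r s ∂(besselMeasure ζ) = 1 := by
  have := lintegral_besselKer_mul hζ hτ r (h := fun s => (s ^ 2 / (4 * τ)) ^ 0) (by fun_prop)
    (by simp) (fun n => integrableOn_besselTerm_moment hζ n 0 hτ r) (A := 1)
    (fun n => integral_besselTerm_moment hζ n 0 hτ r) (by
      convert! hasSum_exp_neg_mul_pow_div_factorial (r ^ 2 / (4 * τ)) using 1
      ext n
      have : 0 < Real.Gamma (n + (ζ + 1 / 2)) := Real.Gamma_pos_of_pos (by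
        have : (0 : ℝ) ≤ n := n.cast_nonneg
        linarith)
      rw [Nat.cast_zero, add_zero, div_self this.ne', mul_one])
  simpa using this

lemma lintegral_besselKer_mul_sq_sub_sq (hζ : -1 / 2 < ζ) {τ : ℝ} (hτ : 0 < τ) (r : ℝ) :
    ∫⁻ s, besselKer ζ τ r s * ENNReal.ofReal ((s ^ 2 - r ^ 2) ^ 2) ∂(besselMeasure ζ) =
      ENNReal.ofReal (8 * τ * r ^ 2 + 16 * τ ^ 2 * ((ζ + 1 / 2) * (ζ + 3 / 2))) := by
  have hexp (n : ℕ) (s : ℝ) : besselTerm ζ n τ r s * s ^ (2 * ζ) * (s ^ 2 - r ^ 2) ^ 2 =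
      16 * τ ^ 2 * (besselTerm ζ n τ r s * s ^ (2 * ζ) * (s ^ 2 / (4 * τ)) ^ 2)
      - 8 * τ * r ^ 2 * (besselTerm ζ n τ r s * s ^ (2 * ζ) * (s ^ 2 / (4 * τ)) ^ 1)
      + r ^ 4 * (besselTerm ζ n τ r s * s ^ (2 * ζ) * (s ^ 2 / (4 * τ)) ^ 0) := by
    field_simp
    ring
  have hi (n j : ℕ) (c : ℝ) := (integrableOn_besselTerm_moment hζ n j hτ r).const_mul c
  refine lintegral_besselKer_mul hζ hτ r (by fun_prop) (fun s => by positivity)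
    (a := fun n => 16 * τ ^ 2 * (Real.exp (-(r ^ 2 / (4 * τ))) *
      ((r ^ 2 / (4 * τ)) ^ n / (Nat.factorial n : ℝ)) *
      ((n + (ζ + 1 / 2)) * (n + (ζ + 1 / 2) + 1) - 2 * (r ^ 2 / (4 * τ)) * (n + (ζ + 1 / 2))
        + (r ^ 2 / (4 * τ)) ^ 2))) (fun n => ?_) (fun n => ?_) ?_
  · simp only [hexp]
    exact ((hi n 2 _).sub (hi n 1 _)).add (hi n 0 _)
  · simp only [hexp]
    have hsub : IntegrableOn (fun s =>
        16 * τ ^ 2 * (besselTerm ζ n τ r s * s ^ (2 * ζ) * (s ^ 2 / (4 * τ)) ^ 2)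
        - 8 * τ * r ^ 2 * (besselTerm ζ n τ r s * s ^ (2 * ζ) * (s ^ 2 / (4 * τ)) ^ 1))
        (Ioi 0) := (hi n 2 _).sub (hi n 1 _)
    rw [integral_add hsub (hi n 0 _), integral_sub (hi n 2 _) (hi n 1 _),
      integral_const_mul, integral_const_mul, integral_const_mul,
      integral_besselTerm_moment hζ n 2 hτ r, integral_besselTerm_moment hζ n 1 hτ r,
      integral_besselTerm_moment hζ n 0 hτ r]
    have hb : 0 < (n : ℝ) + (ζ + 1 / 2) := by
      have : (0 : ℝ) ≤ n := n.cast_nonneg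
      linarith
    generalize (n : ℝ) + (ζ + 1 / 2) = b at *
    have hG : 0 < Real.Gamma b := Real.Gamma_pos_of_pos hb
    have h2 : Real.Gamma (b + (2 : ℕ)) = (b + 1) * (b * Real.Gamma b) := by
      rw [← Real.Gamma_add_one hb.ne', ← Real.Gamma_add_one (by positivity)]
      push_cast
      ring_nf
    have h1 : Real.Gamma (b + (1 : ℕ)) = b * Real.Gamma b := by
      rw [← Real.Gamma_add_one hb.ne', Nat.cast_one]
    rw [h2, h1, Nat.cast_zero, add_zero]
    field_simp
    ring
  · convert! (hasSum_poisson_variance (r ^ 2 / (4 * τ)) (ζ + 1 / 2)).mul_left (16 * τ ^ 2) using 1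
    field_simp
    ring

end Kernel

section Energy

variable {ζ : ℝ}

instance : SFinite (besselMeasure ζ) := by
  unfold besselMeasure
  infer_instance

lemma ae_besselMeasure_pos : ∀ᵐ s ∂(besselMeasure ζ), 0 < s :=
  (withDensity_absolutelyContinuous _ _).ae_le (ae_restrict_mem measurableSet_Ioi)

lemma besselMeasure_Iic_lt_top (hζ : -1 / 2 < ζ) (R : ℝ) : besselMeasure ζ (Iic R) < ∞ := by
  rw [besselMeasure, withDensity_apply _ measurableSet_Iic,
    Measure.restrict_restrict measurableSet_Iic, inter_comm, Ioi_inter_Iic]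
  rcases le_total R 0 with hR | hR
  · simp [Ioc_eq_empty_of_le hR]
  · have h : IntegrableOn (fun s : ℝ => s ^ (2 * ζ)) (Ioc 0 R) :=
      (intervalIntegrable_iff_integrableOn_Ioc_of_le hR).1
        (intervalIntegral.intervalIntegrable_rpow' (by linarith))
    exact h.lintegral_lt_top

lemma isFiniteMeasureOnCompacts_besselMeasure (hζ : -1 / 2 < ζ) :
    IsFiniteMeasureOnCompacts (besselMeasure ζ) where
  lt_top_of_isCompact K hK := by
    obtain ⟨R, hR⟩ := hK.bddAbove
    exact (measure_mono fun x hx => hR hx).trans_lt (besselMeasure_Iic_lt_top hζ R)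

lemma lintegral_lintegral_besselKer_left (hζ : -1 / 2 < ζ) {τ : ℝ} (hτ : 0 < τ) (h : ℝ → ℝ≥0∞) :
    ∫⁻ r, ∫⁻ s, besselKer ζ τ r s * h r ∂(besselMeasure ζ) ∂(besselMeasure ζ) =
      ∫⁻ r, h r ∂(besselMeasure ζ) := by
  congr 1
  ext r
  rw [lintegral_mul_const _ (by fun_prop), lintegral_besselKer hζ hτ, one_mul]

lemma lintegral_lintegral_symm_swap {τ : ℝ} {h : ℝ → ℝ → ℝ≥0∞}
    (hh : Measurable (Function.uncurry h)) :
    ∫⁻ r, ∫⁻ s, besselKer ζ τ r s * h s r ∂(besselMeasure ζ) ∂(besselMeasure ζ) =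
      ∫⁻ r, ∫⁻ s, besselKer ζ τ r s * h r s ∂(besselMeasure ζ) ∂(besselMeasure ζ) := by
  have hh' : Measurable fun x : ℝ × ℝ => h x.2 x.1 := hh.comp measurable_swap
  rw [lintegral_lintegral_swap (Measurable.aemeasurable (by fun_prop))]
  simp only [fun r s => besselKer_comm (ζ := ζ) τ r s]

/-- The quadratic form `∫∫ p(τ,r,s) (f(s) - f(r))²` of the Bessel heat kernel. -/
noncomputable def besselEnergy (ζ τ : ℝ) (f : ℝ → ℝ) : ℝ≥0∞ :=
  ∫⁻ r, ∫⁻ s, besselKer ζ τ r s * ENNReal.ofReal ((f s - f r) ^ 2)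
    ∂(besselMeasure ζ) ∂(besselMeasure ζ)

lemma besselEnergy_le (hζ : -1 / 2 < ζ) {τ : ℝ} (hτ : 0 < τ) {f : ℝ → ℝ} (hf : Measurable f) :
    besselEnergy ζ τ f ≤ 4 * ∫⁻ r, ENNReal.ofReal (f r ^ 2) ∂(besselMeasure ζ) := by
  calc besselEnergy ζ τ f
      ≤ ∫⁻ r, ∫⁻ s, (besselKer ζ τ r s * (2 * ENNReal.ofReal (f s ^ 2)) +
          besselKer ζ τ r s * (2 * ENNReal.ofReal (f r ^ 2)))
          ∂(besselMeasure ζ) ∂(besselMeasure ζ) := by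
        refine lintegral_mono fun r => lintegral_mono fun s => ?_
        dsimp only
        rw [← mul_add, ← mul_add, ← ENNReal.ofReal_add (by positivity) (by positivity),
          ← ENNReal.ofReal_ofNat, ← ENNReal.ofReal_mul (by norm_num)]
        gcongr
        nlinarith [sq_nonneg (f s + f r)]
    _ = ∫⁻ r, ∫⁻ s, besselKer ζ τ r s * (2 * ENNReal.ofReal (f s ^ 2))
          ∂(besselMeasure ζ) ∂(besselMeasure ζ) +
        ∫⁻ r, ∫⁻ s, besselKer ζ τ r s * (2 * ENNReal.ofReal (f r ^ 2))
          ∂(besselMeasure ζ) ∂(besselMeasure ζ) := by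
        rw [← lintegral_add_left (by fun_prop)]
        congr 1
        ext r
        rw [lintegral_add_left (by fun_prop)]
    _ = _ := by
        rw [lintegral_lintegral_symm_swap (h := fun r _ => 2 * ENNReal.ofReal (f r ^ 2))
          (by fun_prop), lintegral_lintegral_besselKer_left hζ hτ,
          lintegral_const_mul _ (by fun_prop), ← add_mul]
        norm_num

lemma besselEnergy_le_add {τ : ℝ} {f g : ℝ → ℝ} (hf : Measurable f) (hg : Measurable g) :
    besselEnergy ζ τ f ≤ 2 * besselEnergy ζ τ (fun s => f s - g s) + 2 * besselEnergy ζ τ g := by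
  calc besselEnergy ζ τ f
      ≤ ∫⁻ r, ∫⁻ s, (2 * (besselKer ζ τ r s * ENNReal.ofReal (((f s - g s) - (f r - g r)) ^ 2)) +
          2 * (besselKer ζ τ r s * ENNReal.ofReal ((g s - g r) ^ 2)))
          ∂(besselMeasure ζ) ∂(besselMeasure ζ) := by
        refine lintegral_mono fun r => lintegral_mono fun s => ?_
        dsimp only
        rw [mul_left_comm, mul_left_comm 2, ← mul_add, ← mul_add,
          ← ENNReal.ofReal_add (by positivity) (by positivity),
          ← ENNReal.ofReal_ofNat, ← ENNReal.ofReal_mul (by norm_num)]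
        gcongr
        nlinarith [sq_nonneg (((f s - g s) - (f r - g r)) - (g s - g r))]
    _ = _ := by
        unfold besselEnergy
        rw [← lintegral_const_mul _ (by fun_prop), ← lintegral_const_mul _ (by fun_prop),
          ← lintegral_add_left (by fun_prop)]
        congr 1
        ext r
        rw [lintegral_add_left (by fun_prop), lintegral_const_mul _ (by fun_prop),
          lintegral_const_mul _ (by fun_prop)]

lemma ENNReal.tendsto_zero_of_forall_le_mul_add {X : Type*} {l : Filter X} {F : X → ℝ≥0∞}
    {c : ℝ≥0∞} (hc : c ≠ ∞)
    (h : ∀ η : ℝ, 0 < η → ∃ b : X → ℝ≥0∞, Tendsto b l (𝓝 0) ∧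
      ∀ᶠ x in l, F x ≤ c * ENNReal.ofReal η + b x) :
    Tendsto F l (𝓝 0) := by
  rw [ENNReal.tendsto_nhds_zero]
  intro ε hε
  have hε2 : 0 < ε / 2 := ENNReal.half_pos hε.ne'
  have h1 : Tendsto (fun η : ℝ => c * ENNReal.ofReal η) (𝓝[>] 0) (𝓝 0) := by
    have h2 : Tendsto (fun η : ℝ => ENNReal.ofReal η) (𝓝[>] 0) (𝓝 0) := by
      simpa using (ENNReal.continuous_ofReal.tendsto 0).mono_left nhdsWithin_le_nhds
    simpa using ENNReal.Tendsto.const_mul h2 (Or.inr hc)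
  obtain ⟨η, hη1, hη2⟩ :=
    ((ENNReal.tendsto_nhds_zero.1 h1 _ hε2).and self_mem_nhdsWithin).exists
  obtain ⟨b, hb, hF⟩ := h η hη2
  filter_upwards [hF, ENNReal.tendsto_nhds_zero.1 hb _ hε2] with x hx hbx
  calc F x ≤ c * ENNReal.ofReal η + b x := hx
    _ ≤ ε / 2 + ε / 2 := by gcongr
    _ = ε := ENNReal.add_halves ε

lemma exists_sq_sub_le_of_hasCompactSupport {g : ℝ → ℝ} (hg : Continuous g)
    (hc : HasCompactSupport g) {η : ℝ} (hη : 0 < η) :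
    ∃ C : ℝ, 0 ≤ C ∧ ∀ r s, 0 < r → 0 < s →
      (g s - g r) ^ 2 ≤ η + C * (s ^ 2 - r ^ 2) ^ 2 := by
  obtain ⟨M, hM⟩ := hc.exists_bound_of_continuous hg
  obtain ⟨δ, hδ, hgδ⟩ := Metric.uniformContinuous_iff.1
    (hc.uniformContinuous_of_continuous hg) (√η) (by positivity)
  refine ⟨(2 * M) ^ 2 / δ ^ 4, by positivity, fun r s hr hs => ?_⟩
  rcases lt_or_ge |s - r| δ with h | h
  · have h1 := hgδ (a := s) (b := r) h
    rw [Real.dist_eq] at h1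
    have h2 : (g s - g r) ^ 2 ≤ η := by
      rw [← sq_abs, ← Real.sq_sqrt hη.le]
      gcongr
    have h3 : 0 ≤ (2 * M) ^ 2 / δ ^ 4 * (s ^ 2 - r ^ 2) ^ 2 := by positivity
    linarith
  · have h1 : δ ^ 2 ≤ |s ^ 2 - r ^ 2| := by
      rw [sq_sub_sq, abs_mul, sq, abs_of_pos (by positivity : 0 < s + r)]
      have h2 : |s - r| ≤ s + r := abs_le.2 ⟨by linarith, by linarith⟩
      gcongr
      exact h.trans h2
    have h4 : δ ^ 4 ≤ (s ^ 2 - r ^ 2) ^ 2 := by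
      rw [← sq_abs (s ^ 2 - r ^ 2), show δ ^ 4 = (δ ^ 2) ^ 2 by ring]
      gcongr
    have h5 : (g s - g r) ^ 2 ≤ (2 * M) ^ 2 := by
      rw [← sq_abs]
      gcongr
      have := hM s
      have := hM r
      rw [Real.norm_eq_abs] at *
      exact (abs_sub _ _).trans (by linarith)
    have h6 : (2 * M) ^ 2 ≤ (2 * M) ^ 2 / δ ^ 4 * (s ^ 2 - r ^ 2) ^ 2 := by
      rw [div_mul_eq_mul_div, le_div_iff₀ (by positivity)]
      gcongr
    linarith

lemma besselEnergy_le_of_support (hζ : -1 / 2 < ζ) {τ : ℝ} (hτ : 0 < τ) {g : ℝ → ℝ} {R η C : ℝ}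
    (hR : ∀ s, R < s → g s = 0) (hη : 0 < η) (hC : 0 ≤ C)
    (hle : ∀ r s, 0 < r → 0 < s → (g s - g r) ^ 2 ≤ η + C * (s ^ 2 - r ^ 2) ^ 2) :
    besselEnergy ζ τ g ≤ 2 * besselMeasure ζ (Iic R) * ENNReal.ofReal η +
      2 * besselMeasure ζ (Iic R) * ENNReal.ofReal
        (C * (8 * τ * R ^ 2 + 16 * τ ^ 2 * ((ζ + 1 / 2) * (ζ + 3 / 2)))) := by
  let q : ℝ → ℝ → ℝ≥0∞ := fun r s => (Iic R).indicator 1 r *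
    ENNReal.ofReal (η + C * (s ^ 2 - r ^ 2) ^ 2)
  have hq : Measurable (Function.uncurry q) := by
    refine Measurable.mul ?_ (by fun_prop)
    exact (measurable_one.indicator measurableSet_Iic).comp measurable_fst
  have hq' : Measurable fun x : ℝ × ℝ => q x.2 x.1 := hq.comp measurable_swap
  have hq1 (r : ℝ) : Measurable fun s => q s r := hq'.comp (measurable_prodMk_left (x := r))
  have inner (r : ℝ) (hr : 0 < r) : ∫⁻ s, besselKer ζ τ r s * q r s ∂(besselMeasure ζ) ≤
      (Iic R).indicator (fun _ => ENNReal.ofReal η + ENNReal.ofReal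
        (C * (8 * τ * R ^ 2 + 16 * τ ^ 2 * ((ζ + 1 / 2) * (ζ + 3 / 2))))) r := by
    by_cases hrR : r ∈ Iic R
    · simp only [q, hrR, indicator_of_mem, Pi.one_apply, one_mul]
      calc _ = ∫⁻ s, (besselKer ζ τ r s * ENNReal.ofReal η + ENNReal.ofReal C *
            (besselKer ζ τ r s * ENNReal.ofReal ((s ^ 2 - r ^ 2) ^ 2))) ∂(besselMeasure ζ) := by
            congr 1
            ext s
            rw [ENNReal.ofReal_add hη.le (by positivity), ENNReal.ofReal_mul hC]
            ring
        _ = ENNReal.ofReal η + ENNReal.ofReal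
            (C * (8 * τ * r ^ 2 + 16 * τ ^ 2 * ((ζ + 1 / 2) * (ζ + 3 / 2)))) := by
            rw [lintegral_add_left (by fun_prop), lintegral_mul_const _ (by fun_prop),
              lintegral_const_mul _ (by fun_prop), lintegral_besselKer hζ hτ,
              lintegral_besselKer_mul_sq_sub_sq hζ hτ, ENNReal.ofReal_mul hC, one_mul]
        _ ≤ _ := by
            have : r ≤ R := hrR
            gcongr
    · simp [q, hrR]
  calc besselEnergy ζ τ g
      ≤ ∫⁻ r, ∫⁻ s, (besselKer ζ τ r s * q s r + besselKer ζ τ r s * q r s)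
          ∂(besselMeasure ζ) ∂(besselMeasure ζ) := by
        refine lintegral_mono_ae (ae_besselMeasure_pos.mono fun r hr =>
          lintegral_mono_ae (ae_besselMeasure_pos.mono fun s hs => ?_))
        rw [← mul_add]
        gcongr
        by_cases h1 : r ≤ R
        · refine le_trans (ENNReal.ofReal_le_ofReal (hle r s hr hs)) ?_
          simp [q, h1]
        by_cases h2 : s ≤ R
        · have := hle s r hs hr
          rw [← neg_sq, neg_sub] at this
          refine le_trans (ENNReal.ofReal_le_ofReal this) ?_
          simp [q, h2]
        · simp [hR r (not_le.1 h1), hR s (not_le.1 h2)]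
    _ = 2 * ∫⁻ r, ∫⁻ s, besselKer ζ τ r s * q r s ∂(besselMeasure ζ) ∂(besselMeasure ζ) := by
        rw [two_mul]
        nth_rewrite 1 [← lintegral_lintegral_symm_swap hq]
        rw [← lintegral_add_left (by fun_prop)]
        congr 1
        ext r
        have := hq1 r
        rw [lintegral_add_left (by fun_prop)]
    _ ≤ 2 * ∫⁻ r, (Iic R).indicator (fun _ => ENNReal.ofReal η + ENNReal.ofReal
        (C * (8 * τ * R ^ 2 + 16 * τ ^ 2 * ((ζ + 1 / 2) * (ζ + 3 / 2))))) r ∂(besselMeasure ζ) := by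
        gcongr 2 * ?_
        exact lintegral_mono_ae (ae_besselMeasure_pos.mono inner)
    _ = _ := by
        rw [lintegral_indicator_const measurableSet_Iic]
        ring

lemma tendsto_besselEnergy_of_hasCompactSupport (hζ : -1 / 2 < ζ) {g : ℝ → ℝ} (hg : Continuous g)
    (hc : HasCompactSupport g) :
    Tendsto (fun τ => besselEnergy ζ τ g) (𝓝[>] 0) (𝓝 0) := by
  obtain ⟨R, hR⟩ : ∃ R, ∀ s, R < s → g s = 0 := by
    obtain ⟨R, hR⟩ := hc.isCompact.bddAbove
    refine ⟨R, fun s hs => image_eq_zero_of_notMem_tsupport fun h => ?_⟩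
    exact absurd (hR h) (not_le.2 hs)
  have hm : 2 * besselMeasure ζ (Iic R) ≠ ∞ :=
    ENNReal.mul_ne_top (by simp) (besselMeasure_Iic_lt_top hζ R).ne
  refine ENNReal.tendsto_zero_of_forall_le_mul_add hm fun η hη => ?_
  obtain ⟨C, hC, hle⟩ := exists_sq_sub_le_of_hasCompactSupport hg hc hη
  refine ⟨_, ?_, eventually_nhdsWithin_of_forall fun τ hτ =>
    besselEnergy_le_of_support hζ hτ hR hη hC hle⟩
  have h1 : Continuous fun τ : ℝ => ENNReal.ofReal
      (C * (8 * τ * R ^ 2 + 16 * τ ^ 2 * ((ζ + 1 / 2) * (ζ + 3 / 2)))) :=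
    ENNReal.continuous_ofReal.comp (by fun_prop)
  have h2 := (h1.tendsto 0).mono_left (nhdsWithin_le_nhds (s := Ioi 0))
  simpa using ENNReal.Tendsto.const_mul h2 (Or.inr hm)

lemma tendsto_besselEnergy (hζ : -1 / 2 < ζ) {f : ℝ → ℝ} (hf : Measurable f)
    (hf2 : ∫⁻ s, ENNReal.ofReal (f s ^ 2) ∂(besselMeasure ζ) < ∞) :
    Tendsto (fun τ => besselEnergy ζ τ f) (𝓝[>] 0) (𝓝 0) := by
  have := isFiniteMeasureOnCompacts_besselMeasure hζ
  have hint : Integrable (fun s => f s ^ 2) (besselMeasure ζ) :=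
    ⟨by fun_prop, by
      rwa [hasFiniteIntegral_iff_ofReal (Eventually.of_forall fun s => sq_nonneg _)]⟩
  have hL2 : MemLp f (ENNReal.ofReal 2) (besselMeasure ζ) := by
    simpa using (memLp_two_iff_integrable_sq hf.aestronglyMeasurable).2 hint
  refine ENNReal.tendsto_zero_of_forall_le_mul_add (c := 2 * 4) (by finiteness) fun η hη => ?_
  obtain ⟨g, hgc, hfg, hg, hg2⟩ := hL2.exists_hasCompactSupport_integral_rpow_sub_le two_pos hη
  refine ⟨fun τ => 2 * besselEnergy ζ τ g, ?_, ?_⟩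
  · simpa using ENNReal.Tendsto.const_mul (a := 2)
      (tendsto_besselEnergy_of_hasCompactSupport hζ hg hgc) (Or.inr (by simp))
  refine eventually_nhdsWithin_of_forall fun τ hτ => ?_
  refine (besselEnergy_le_add hf hg.measurable).trans ?_
  rw [mul_assoc]
  gcongr
  refine (besselEnergy_le hζ hτ (hf.sub hg.measurable)).trans ?_
  gcongr
  have hfg2 : Integrable (fun s => (f s - g s) ^ 2) (besselMeasure ζ) := by
    have := hL2.sub hg2
    rw [ENNReal.ofReal_ofNat] at this
    exact this.integrable_sq
  simp only [Pi.sub_apply]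
  rw [← ofReal_integral_eq_lintegral_ofReal hfg2 (Eventually.of_forall fun s => sq_nonneg _)]
  simpa using ENNReal.ofReal_le_ofReal hfg

end Energy

section Subordination

variable {ζ : ℝ}

lemma enorm_integral_sq_le_lintegral {ν : Measure ℝ} [IsProbabilityMeasure ν] {f : ℝ → ℝ}
    (hf : Measurable f) (c : ℝ) :
    ‖((∫ s, f s ∂ν) - c) ^ 2‖ₑ ≤ ∫⁻ s, ENNReal.ofReal ((f s - c) ^ 2) ∂ν := by
  have hsq : ∫⁻ s, ENNReal.ofReal ((f s - c) ^ 2) ∂ν = eLpNorm (fun s => f s - c) 2 ν ^ 2 := by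
    have := eLpNorm_nnreal_pow_eq_lintegral (f := fun s => f s - c) (μ := ν) (p := 2) two_ne_zero
    simp only [NNReal.coe_ofNat, ENNReal.rpow_ofNat, ENNReal.coe_ofNat] at this
    rw [this]
    congr 1
    ext s
    rw [← enorm_pow, Real.enorm_of_nonneg (sq_nonneg _)]
  rw [hsq]
  by_cases htop : eLpNorm (fun s => f s - c) 2 ν = ∞
  · simp [htop]
  have hm : MemLp (fun s => f s - c) 2 ν := ⟨by fun_prop, lt_top_iff_ne_top.2 htop⟩
  have hi : Integrable (fun s => f s - c) ν := hm.integrable (by norm_num)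
  have hf1 : Integrable f ν := (hi.add (integrable_const c)).congr
    (Eventually.of_forall fun s => by simp)
  have h1 : (∫ s, f s ∂ν) - c = ∫ s, (f s - c) ∂ν := by
    rw [integral_sub hf1 (integrable_const c)]
    simp
  rw [h1, enorm_pow]
  gcongr
  calc ‖∫ s, (f s - c) ∂ν‖ₑ ≤ ∫⁻ s, ‖f s - c‖ₑ ∂ν := enorm_integral_le_lintegral_enorm _
    _ = eLpNorm (fun s => f s - c) 1 ν := eLpNorm_one_eq_lintegral_enorm.symm
    _ ≤ _ := eLpNorm_le_eLpNorm_of_exponent_le (by norm_num) (by fun_prop)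

lemma enorm_setIntegral_sub_sq_le {κ : ℝ → ℝ≥0∞} (hκ : Measurable κ)
    (h1 : ∫⁻ s, κ s ∂(besselMeasure ζ) = 1) {P f : ℝ → ℝ} (hf : Measurable f)
    (hP : ∀ s, 0 < s → P s = (κ s).toReal) (c : ℝ) :
    ‖((∫ s in Ioi 0, P s * f s * s ^ (2 * ζ)) - c) ^ 2‖ₑ ≤
      ∫⁻ s, κ s * ENNReal.ofReal ((f s - c) ^ 2) ∂(besselMeasure ζ) := by
  have : IsProbabilityMeasure ((besselMeasure ζ).withDensity κ) := ⟨by simpa using h1⟩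
  have h2 : ∫ s, f s ∂((besselMeasure ζ).withDensity κ) =
      ∫ s in Ioi 0, P s * f s * s ^ (2 * ζ) := by
    rw [integral_withDensity_eq_integral_toReal_smul hκ (ae_lt_top hκ (by simp [h1])),
      besselMeasure, integral_withDensity_eq_integral_toReal_smul (by fun_prop) (by simp)]
    refine setIntegral_congr_fun measurableSet_Ioi fun s hs => ?_
    simp only [smul_eq_mul]
    rw [hP s hs, ENNReal.toReal_ofReal (Real.rpow_nonneg (le_of_lt hs) _)]
    ring
  have h3 := enorm_integral_sq_le_lintegral (ν := (besselMeasure ζ).withDensity κ) hf c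
  rwa [h2, lintegral_withDensity_eq_lintegral_mul _ hκ (by fun_prop)] at h3

lemma enorm_integral_kernel_sub_sq_le {κ : ℝ → ℝ → ℝ≥0∞} (hκ : Measurable (Function.uncurry κ))
    (h1 : ∀ r, 0 < r → ∫⁻ s, κ r s ∂(besselMeasure ζ) = 1) {P : ℝ → ℝ → ℝ} {f : ℝ → ℝ}
    (hf : Measurable f) (hP : ∀ r s, 0 < r → 0 < s → P r s = (κ r s).toReal) :
    ‖∫ r in Ioi 0, ((∫ s in Ioi 0, P r s * f s * s ^ (2 * ζ)) - f r) ^ 2 * r ^ (2 * ζ)‖ₑ ≤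
      ∫⁻ r, ∫⁻ s, κ r s * ENNReal.ofReal ((f s - f r) ^ 2)
        ∂(besselMeasure ζ) ∂(besselMeasure ζ) := by
  rw [lintegral_besselMeasure (Measurable.lintegral_prod_right' (f := fun x : ℝ × ℝ =>
    κ x.1 x.2 * ENNReal.ofReal ((f x.2 - f x.1) ^ 2)) (by fun_prop))]
  refine (enorm_integral_le_lintegral_enorm _).trans
    (setLIntegral_mono' measurableSet_Ioi fun r hr => ?_)
  rw [enorm_mul, mul_comm, Real.enorm_of_nonneg (Real.rpow_nonneg (le_of_lt hr) _)]
  gcongr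
  exact enorm_setIntegral_sub_sq_le (hκ.comp measurable_prodMk_left) (h1 r hr) hf
    (fun s hs => hP r s hr hs) _

/-- The Bessel heat kernel subordinated by the density `w`. -/
noncomputable def besselKerSub (ζ : ℝ) (w : ℝ → ℝ≥0∞) (r s : ℝ) : ℝ≥0∞ :=
  ∫⁻ τ in Ioi 0, besselKer ζ τ r s * w τ

lemma measurable_besselKerSub {w : ℝ → ℝ≥0∞} (hw : Measurable w) :
    Measurable (Function.uncurry (besselKerSub ζ w)) :=
  Measurable.lintegral_prod_right' (f := fun x : (ℝ × ℝ) × ℝ =>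
    besselKer ζ x.2 x.1.1 x.1.2 * w x.2) (by fun_prop)

lemma lintegral_besselKerSub (hζ : -1 / 2 < ζ) {w : ℝ → ℝ≥0∞} (hw : Measurable w) (r : ℝ) :
    ∫⁻ s, besselKerSub ζ w r s ∂(besselMeasure ζ) = ∫⁻ τ in Ioi 0, w τ := by
  unfold besselKerSub
  rw [lintegral_lintegral_swap (Measurable.aemeasurable (by fun_prop))]
  refine setLIntegral_congr_fun measurableSet_Ioi fun τ hτ => ?_
  rw [lintegral_mul_const _ (by fun_prop), lintegral_besselKer hζ hτ, one_mul]

lemma lintegral_besselKerSub_mul {w : ℝ → ℝ≥0∞} (hw : Measurable w) {g : ℝ → ℝ≥0∞}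
    (hg : Measurable g) (r : ℝ) :
    ∫⁻ s, besselKerSub ζ w r s * g s ∂(besselMeasure ζ) =
      ∫⁻ τ in Ioi 0, (∫⁻ s, besselKer ζ τ r s * g s ∂(besselMeasure ζ)) * w τ := by
  calc ∫⁻ s, besselKerSub ζ w r s * g s ∂(besselMeasure ζ)
      = ∫⁻ s, (∫⁻ τ in Ioi 0, besselKer ζ τ r s * g s * w τ) ∂(besselMeasure ζ) := by
        refine lintegral_congr fun s => ?_
        rw [besselKerSub, ← lintegral_mul_const _ (by fun_prop)]
        simp only [mul_right_comm]
    _ = ∫⁻ τ in Ioi 0, (∫⁻ s, besselKer ζ τ r s * g s * w τ ∂(besselMeasure ζ)) :=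
        lintegral_lintegral_swap (Measurable.aemeasurable (by fun_prop))
    _ = _ := lintegral_congr fun τ => lintegral_mul_const _ (by fun_prop)

lemma lintegral_lintegral_mul_right_swap {X Y : Type*} [MeasurableSpace X] [MeasurableSpace Y]
    {μ : Measure X} {ν : Measure Y} [SFinite μ] [SFinite ν] {F : X → Y → ℝ≥0∞}
    (hF : Measurable (Function.uncurry F)) {w : Y → ℝ≥0∞} (hw : Measurable w) :
    ∫⁻ x, (∫⁻ y, F x y * w y ∂ν) ∂μ = ∫⁻ y, (∫⁻ x, F x y ∂μ) * w y ∂ν := by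
  rw [lintegral_lintegral_swap (hF.mul (hw.comp measurable_snd)).aemeasurable]
  exact lintegral_congr fun y => lintegral_mul_const _ (hF.comp measurable_prodMk_right)

lemma lintegral_besselKerSub_mul_sq {w : ℝ → ℝ≥0∞} (hw : Measurable w) {f : ℝ → ℝ}
    (hf : Measurable f) :
    ∫⁻ r, ∫⁻ s, besselKerSub ζ w r s * ENNReal.ofReal ((f s - f r) ^ 2)
        ∂(besselMeasure ζ) ∂(besselMeasure ζ) =
      ∫⁻ τ in Ioi 0, besselEnergy ζ τ f * w τ := by
  have h1 : Measurable fun x : ℝ × ℝ =>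
      ∫⁻ s, besselKer ζ x.2 x.1 s * ENNReal.ofReal ((f s - f x.1) ^ 2) ∂(besselMeasure ζ) :=
    Measurable.lintegral_prod_right' (f := fun y : (ℝ × ℝ) × ℝ =>
      besselKer ζ y.1.2 y.1.1 y.2 * ENNReal.ofReal ((f y.2 - f y.1.1) ^ 2)) (by fun_prop)
  calc _ = ∫⁻ r, (∫⁻ τ in Ioi 0, (∫⁻ s, besselKer ζ τ r s * ENNReal.ofReal ((f s - f r) ^ 2)
        ∂(besselMeasure ζ)) * w τ) ∂(besselMeasure ζ) :=
        lintegral_congr fun r => lintegral_besselKerSub_mul hw (by fun_prop) r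
    _ = _ := lintegral_lintegral_mul_right_swap h1 hw

/-- Nonnegative densities on `(0, ∞)` of mass one whose Laplace transform at `1` tends to `1`
concentrate at the origin. -/
lemma tendsto_lintegral_mul_of_laplace {X : Type*} {l : Filter X} {w : X → ℝ → ℝ≥0∞}
    {D : ℝ → ℝ≥0∞} {M : ℝ≥0∞} (hM : M ≠ ∞) (hDM : ∀ τ, 0 < τ → D τ ≤ M)
    (hD : Tendsto D (𝓝[>] 0) (𝓝 0)) (hw : ∀ᶠ t in l, Measurable (w t))
    (hw1 : ∀ᶠ t in l, ∫⁻ τ in Ioi 0, w t τ = 1)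
    (hwL : Tendsto (fun t => ∫⁻ τ in Ioi 0, ENNReal.ofReal (1 - Real.exp (-τ)) * w t τ) l
      (𝓝 0)) :
    Tendsto (fun t => ∫⁻ τ in Ioi 0, D τ * w t τ) l (𝓝 0) := by
  refine ENNReal.tendsto_zero_of_forall_le_mul_add (c := 1) (by simp) fun η hη => ?_
  obtain ⟨δ, hδ, hDδ⟩ := mem_nhdsGT_iff_exists_Ioo_subset.1
    (ENNReal.tendsto_nhds_zero.1 hD _ (ENNReal.ofReal_pos.2 hη))
  have hδ' : 0 < 1 - Real.exp (-δ) := by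
    have : Real.exp (-δ) < 1 := Real.exp_lt_one_iff.2 (neg_lt_zero.2 hδ)
    linarith
  have hK : M * (ENNReal.ofReal (1 - Real.exp (-δ)))⁻¹ ≠ ∞ :=
    ENNReal.mul_ne_top hM (ENNReal.inv_ne_top.2 (ENNReal.ofReal_pos.2 hδ').ne')
  refine ⟨fun t => M * (ENNReal.ofReal (1 - Real.exp (-δ)))⁻¹ *
    ∫⁻ τ in Ioi 0, ENNReal.ofReal (1 - Real.exp (-τ)) * w t τ, ?_, ?_⟩
  · simpa using ENNReal.Tendsto.const_mul hwL (Or.inr hK)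
  filter_upwards [hw, hw1] with t ht ht1
  calc _ ≤ ∫⁻ τ in Ioi 0, (ENNReal.ofReal η * w t τ +
        M * (ENNReal.ofReal (1 - Real.exp (-δ)))⁻¹ *
          (ENNReal.ofReal (1 - Real.exp (-τ)) * w t τ)) := by
        refine setLIntegral_mono' measurableSet_Ioi fun τ hτ => ?_
        rw [← mul_assoc, ← add_mul]
        gcongr
        rcases lt_or_ge τ δ with h | h
        · exact le_add_right (hDδ ⟨hτ, h⟩)
        · refine le_add_left ((hDM τ hτ).trans ?_)
          rw [mul_assoc]
          refine le_mul_of_one_le_right' ?_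
          rw [← ENNReal.inv_mul_cancel (ENNReal.ofReal_pos.2 hδ').ne' ENNReal.ofReal_ne_top]
          gcongr
    _ = _ := by
        rw [lintegral_add_left (by fun_prop), lintegral_const_mul _ ht,
          lintegral_const_mul _ (by fun_prop), ht1, mul_one, one_mul]

lemma IsStableSubordinatorDensity.integrableOn_exp_mul {α : ℝ} {σ : ℝ → ℝ → ℝ}
    (hσ : IsStableSubordinatorDensity α σ) {t l : ℝ} (ht : 0 < t) (hl : 0 ≤ l) :
    IntegrableOn (fun τ => Real.exp (-τ * l) * σ t τ) (Ioi 0) := by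
  by_contra h
  have h1 := hσ.2.2 t l ht hl
  rw [integral_undef h] at h1
  exact (Real.exp_pos _).ne h1

lemma IsStableSubordinatorDensity.lintegral_eq_one {α : ℝ} (hα : 0 < α) {σ : ℝ → ℝ → ℝ}
    (hσ : IsStableSubordinatorDensity α σ) {t : ℝ} (ht : 0 < t) :
    ∫⁻ τ in Ioi 0, ENNReal.ofReal (σ t τ) = 1 := by
  have h1 := hσ.integrableOn_exp_mul ht le_rfl
  have h2 := hσ.2.2 t 0 ht le_rfl
  simp only [mul_zero, Real.exp_zero, one_mul, Real.zero_rpow (half_pos hα).ne'] at h1 h2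
  rw [← ofReal_integral_eq_lintegral_ofReal h1
    (ae_restrict_of_forall_mem measurableSet_Ioi (hσ.1 t ht)), h2, ENNReal.ofReal_one]

lemma IsStableSubordinatorDensity.lintegral_one_sub_exp {α : ℝ} (hα : 0 < α) {σ : ℝ → ℝ → ℝ}
    (hσ : IsStableSubordinatorDensity α σ) {t : ℝ} (ht : 0 < t) :
    ∫⁻ τ in Ioi 0, ENNReal.ofReal (1 - Real.exp (-τ)) * ENNReal.ofReal (σ t τ) =
      ENNReal.ofReal (1 - Real.exp (-t)) := by
  have h0 := hσ.integrableOn_exp_mul ht le_rfl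
  have h0' := hσ.2.2 t 0 ht le_rfl
  have h1 := hσ.integrableOn_exp_mul ht zero_le_one
  have h1' := hσ.2.2 t 1 ht zero_le_one
  simp only [mul_zero, Real.exp_zero, one_mul, Real.zero_rpow (half_pos hα).ne'] at h0 h0'
  simp only [mul_one, Real.one_rpow] at h1 h1'
  have hpos (τ : ℝ) (hτ : τ ∈ Ioi (0 : ℝ)) : 0 ≤ 1 - Real.exp (-τ) := by
    have : Real.exp (-τ) < 1 := Real.exp_lt_one_iff.2 (neg_lt_zero.2 hτ)
    linarith
  have h2 : ∫ τ in Ioi 0, (σ t τ - Real.exp (-τ) * σ t τ) = 1 - Real.exp (-t) := by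
    rw [integral_sub h0 h1, h0', h1']
  have h3 : IntegrableOn (fun τ => σ t τ - Real.exp (-τ) * σ t τ) (Ioi 0) := h0.sub h1
  rw [← h2, ofReal_integral_eq_lintegral_ofReal h3]
  · refine setLIntegral_congr_fun measurableSet_Ioi fun τ hτ => ?_
    rw [← ENNReal.ofReal_mul (hpos τ hτ), sub_mul, one_mul]
  · refine ae_restrict_of_forall_mem measurableSet_Ioi fun τ hτ => ?_
    have := mul_nonneg (hpos τ hτ) (hσ.1 t ht τ hτ)
    simp only [Pi.zero_apply]
    linarith

lemma subKernel_eq_toReal (hζ : -1 / 2 < ζ) {σ : ℝ → ℝ → ℝ} {t : ℝ}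
    (hm : Measurable (σ t)) (h0 : ∀ τ, 0 < τ → 0 ≤ σ t τ) {r s : ℝ} (hr : 0 < r) (hs : 0 < s) :
    subKernel ζ σ t r s = (besselKerSub ζ (fun τ => ENNReal.ofReal (σ t τ)) r s).toReal := by
  have h1 : ∀ τ ∈ Ioi (0 : ℝ), besselHeat ζ τ r s * σ t τ = (besselKer ζ τ r s).toReal * σ t τ := by
    intro τ hτ
    rw [← ofReal_besselHeat hζ hτ hr hs, ENNReal.toReal_ofReal (besselHeat_nonneg hζ hτ hr hs)]
  rw [subKernel, setIntegral_congr_fun measurableSet_Ioi h1, integral_eq_lintegral_of_nonneg_ae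
    (ae_restrict_of_forall_mem measurableSet_Ioi fun τ hτ =>
      mul_nonneg ENNReal.toReal_nonneg (h0 τ hτ))
    (Measurable.aestronglyMeasurable (by fun_prop)), besselKerSub]
  congr 1
  refine setLIntegral_congr_fun measurableSet_Ioi fun τ hτ => ?_
  rw [← h1 τ hτ, ENNReal.ofReal_mul (besselHeat_nonneg hζ hτ hr hs),
    ofReal_besselHeat hζ hτ hr hs]

end Subordination

theorem stmt10 (ζ α : ℝ) (hζ : -1/2 < ζ) (hα0 : 0 < α) (hα2 : α ≤ 2)
    (p : ℝ → ℝ → ℝ → ℝ) (hp : IsSubordinatedBesselKernel ζ α p)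
    (f : ℝ → ℝ) (hf : Measurable f)
    (hf2 : Integrable (fun s => f s ^ 2 * s ^ (2 * ζ)) (volume.restrict (Ioi 0))) :
    Tendsto (fun t => ∫ r in Ioi (0 : ℝ),
        ((∫ s in Ioi (0 : ℝ), p t r s * f s * s ^ (2 * ζ)) - f r) ^ 2 * r ^ (2 * ζ))
      (nhdsWithin 0 (Ioi 0)) (nhds 0) := by
  have hζ' : -1 / 2 < ζ := hζ
  have hM : ∫⁻ s, ENNReal.ofReal (f s ^ 2) ∂(besselMeasure ζ) < ∞ := by
    rw [lintegral_besselMeasure (by fun_prop)]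
    refine lt_of_le_of_lt (le_of_eq ?_) hf2.lintegral_lt_top
    congr 1
    ext s
    rw [ENNReal.ofReal_mul (sq_nonneg _), mul_comm]
  have hE := tendsto_besselEnergy hζ' hf hM
  rw [tendsto_zero_iff_enorm_tendsto_zero]
  rcases hp with ⟨-, hp⟩ | ⟨-, σ, hσ, hp⟩
  · refine tendsto_of_tendsto_of_tendsto_of_le_of_le' tendsto_const_nhds hE
      (Eventually.of_forall fun _ => zero_le) (eventually_nhdsWithin_of_forall fun t ht => ?_)
    refine enorm_integral_kernel_sub_sq_le (κ := besselKer ζ t)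
      (measurable_besselKer measurable_const measurable_fst measurable_snd)
      (fun r _ => lintegral_besselKer hζ' ht r) hf fun r s hr hs => ?_
    rw [hp, ← ofReal_besselHeat hζ' ht hr hs,
      ENNReal.toReal_ofReal (besselHeat_nonneg hζ' ht hr hs)]
  · have hw (t : ℝ) (ht : 0 < t) : Measurable fun τ => ENNReal.ofReal (σ t τ) :=
      (hσ.2.1 t ht).ennreal_ofReal
    have hexp : Tendsto (fun t => ENNReal.ofReal (1 - Real.exp (-t))) (𝓝[>] 0) (𝓝 0) := by
      have h1 : Continuous fun t : ℝ => ENNReal.ofReal (1 - Real.exp (-t)) :=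
        ENNReal.continuous_ofReal.comp (by fun_prop)
      simpa using (h1.tendsto 0).mono_left (nhdsWithin_le_nhds (s := Ioi 0))
    have hlim := tendsto_lintegral_mul_of_laplace (l := 𝓝[>] (0 : ℝ))
      (w := fun t τ => ENNReal.ofReal (σ t τ)) (ENNReal.mul_ne_top (by simp) hM.ne)
      (fun τ hτ => besselEnergy_le hζ' hτ hf) hE
      (eventually_nhdsWithin_of_forall hw)
      (eventually_nhdsWithin_of_forall fun t ht => hσ.lintegral_eq_one hα0 ht)
      (hexp.congr' (eventually_nhdsWithin_of_forall fun t ht =>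
        (hσ.lintegral_one_sub_exp hα0 ht).symm))
    refine tendsto_of_tendsto_of_tendsto_of_le_of_le' tendsto_const_nhds hlim
      (Eventually.of_forall fun _ => zero_le) (eventually_nhdsWithin_of_forall fun t ht => ?_)
    rw [← lintegral_besselKerSub_mul_sq (hw t ht) hf]
    refine enorm_integral_kernel_sub_sq_le (measurable_besselKerSub (hw t ht))
      (fun r _ => ?_) hf fun r s hr hs => ?_
    · rw [lintegral_besselKerSub hζ' (hw t ht), hσ.lintegral_eq_one hα0 ht]
    · rw [hp, subKernel_eq_toReal hζ' (hσ.2.1 t ht) (hσ.1 t ht) hr hs]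
end

section
/- Let ζ ∈ [0, ∞) and α ∈ (0,2). Then there exists a constant C > 0 (depending only on ζ and α) such that for all r, s, z, t, τ > 0: min{ ((r+z)/(r+s+z))^{2ζ} · p_ζ^{(α)}(t,r,z), ((s+z)/(r+s+z))^{2ζ} · p_ζ^{(α)}(τ,z,s) } ≤ C · p_ζ^{(α)}(t+τ,r,s). -/
open MeasureTheory Real Set Filter

theorem exists_bounds_of_tendsto_one {f : ℕ → ℝ} (hf : ∀ k, 0 < f k)
    (h : Tendsto f atTop (nhds 1)) : ∃ c C : ℝ, 0 < c ∧ 0 < C ∧ ∀ k, c ≤ f k ∧ f k ≤ C := by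
  obtain ⟨C, hC⟩ := h.bddAbove_range
  obtain ⟨D, hD⟩ := (h.inv₀ one_ne_zero).bddAbove_range
  have hC' : ∀ k, f k ≤ C := fun k => hC ⟨k, rfl⟩
  have hD' : ∀ k, (f k)⁻¹ ≤ D := fun k => hD ⟨k, rfl⟩
  have hD0 : 0 < D := (inv_pos.2 (hf 0)).trans_le (hD' 0)
  exact ⟨D⁻¹, C, inv_pos.2 hD0, (hf 0).trans_le (hC' 0),
    fun k => ⟨inv_le_of_inv_le₀ (hf k) (hD' k), hC' k⟩⟩

theorem Gamma_add_nat_eq_prod {s : ℝ} (hs : 0 < s) (n : ℕ) :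
    Gamma (s + n) = (∏ j ∈ Finset.range n, (s + j)) * Gamma s := by
  induction n with
  | zero => simp
  | succ n ih =>
    rw [Finset.prod_range_succ, Nat.cast_succ, ← add_assoc, Gamma_add_one (by positivity), ih]
    ring

theorem tendsto_rpow_mul_Gamma_ratio {a b : ℝ} (ha : 0 < a) (hb : 0 < b) :
    Tendsto (fun n : ℕ => (n : ℝ) ^ (b - a) * (Gamma (a + (n + 1 : ℕ)) / Gamma (b + (n + 1 : ℕ))))
      atTop (nhds 1) := by
  have h := ((GammaSeq_tendsto_Gamma b).div (GammaSeq_tendsto_Gamma a)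
    (Gamma_pos_of_pos ha).ne').mul_const (Gamma a / Gamma b)
  have h0 : Gamma b / Gamma a * (Gamma a / Gamma b) = 1 := by
    have := (Gamma_pos_of_pos ha).ne'
    have := (Gamma_pos_of_pos hb).ne'
    field_simp
  rw [h0] at h
  refine h.congr' ?_
  filter_upwards [eventually_gt_atTop 0] with n hn
  have hn' : (0 : ℝ) < n := by exact_mod_cast hn
  have hPa : 0 < ∏ j ∈ Finset.range (n + 1), (a + j) := Finset.prod_pos fun _ _ => by positivity
  have hPb : 0 < ∏ j ∈ Finset.range (n + 1), (b + j) := Finset.prod_pos fun _ _ => by positivity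
  have hfac : (n.factorial : ℝ) ≠ 0 := by positivity
  have hra : (n : ℝ) ^ a ≠ 0 := by positivity
  have := (Gamma_pos_of_pos ha).ne'
  have := (Gamma_pos_of_pos hb).ne'
  simp only [Pi.div_apply, GammaSeq]
  rw [Gamma_add_nat_eq_prod ha, Gamma_add_nat_eq_prod hb, rpow_sub hn']
  field_simp

theorem Gamma_ratio_bounds {ζ : ℝ} (hζ : 0 ≤ ζ) :
    ∃ c C : ℝ, 0 < c ∧ 0 < C ∧ ∀ k : ℕ,
      c * ((k : ℝ) + 1) ^ (-ζ) ≤ Gamma (k + 1 / 2) / Gamma (k + 1 / 2 + ζ) ∧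
      Gamma (k + 1 / 2) / Gamma (k + 1 / 2 + ζ) ≤ C * ((k : ℝ) + 1) ^ (-ζ) := by
  have hpos : ∀ k : ℕ,
      0 < ((k : ℝ) + 1) ^ ζ * (Gamma (k + 1 / 2) / Gamma (k + 1 / 2 + ζ)) := fun k =>
    mul_pos (by positivity) (div_pos (Gamma_pos_of_pos (by positivity))
      (Gamma_pos_of_pos (by positivity)))
  have hlim : Tendsto
      (fun k : ℕ => ((k : ℝ) + 1) ^ ζ * (Gamma (k + 1 / 2) / Gamma (k + 1 / 2 + ζ)))
      atTop (nhds 1) := by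
    rw [← tendsto_add_atTop_iff_nat 1]
    have h1 := tendsto_rpow_mul_Gamma_ratio (a := 1 / 2) (b := 1 / 2 + ζ) (by norm_num)
      (by positivity)
    have h2 : Tendsto (fun n : ℕ => (((n : ℝ) + 2) / n) ^ ζ) atTop (nhds 1) := by
      have h3 : Tendsto (fun n : ℕ => 1 + 2 / (n : ℝ)) atTop (nhds (1 + 0)) :=
        tendsto_const_nhds.add (tendsto_const_div_atTop_nhds_zero_nat 2)
      have h4 := h3.rpow_const (p := ζ) (Or.inl (by norm_num))
      rw [add_zero, one_rpow] at h4
      refine h4.congr' ?_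
      filter_upwards [eventually_gt_atTop 0] with n hn
      have hn' : (0 : ℝ) < n := by exact_mod_cast hn
      congr 1
      field_simp
    have h := h1.mul h2
    rw [one_mul] at h
    refine h.congr' ?_
    filter_upwards [eventually_gt_atTop 0] with n hn
    have hn' : (0 : ℝ) < n := by exact_mod_cast hn
    rw [div_rpow (by positivity) hn'.le, show (1 / 2 + ζ - 1 / 2 : ℝ) = ζ by ring]
    have : (n : ℝ) ^ ζ ≠ 0 := by positivity
    push_cast
    rw [show (n : ℝ) + 1 + 1 = n + 2 by ring, show (n : ℝ) + 1 + 1 / 2 = 1 / 2 + (n + 1) by ring,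
      show 1 / 2 + ((n : ℝ) + 1) + ζ = 1 / 2 + ζ + (n + 1) by ring]
    field_simp
  obtain ⟨c, C, hc, hC, h⟩ := exists_bounds_of_tendsto_one hpos hlim
  refine ⟨c, C, hc, hC, fun k => ?_⟩
  have hk : (0 : ℝ) < ((k : ℝ) + 1) ^ ζ := by positivity
  rw [rpow_neg (by positivity), ← div_eq_mul_inv, ← div_eq_mul_inv, div_le_iff₀ hk, le_div_iff₀ hk]
  constructor <;> linarith [h k]

theorem tsum_pow_div_factorial_comp_le_exp {x : ℝ} (hx : 0 ≤ x) {g : ℕ → ℕ}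
    (hg : Function.Injective g) :
    Summable (fun k => x ^ g k / (g k).factorial) ∧
      ∑' k, x ^ g k / ((g k).factorial : ℝ) ≤ exp x := by
  have hs := Real.summable_pow_div_factorial x
  refine ⟨hs.comp_injective hg, ?_⟩
  rw [exp_eq_exp_ℝ, NormedSpace.exp_eq_tsum_div]
  exact tsum_comp_le_tsum_of_inj hs (fun k => by positivity) hg

theorem summable_weighted_cosh_series {ζ x : ℝ} (hζ : 0 ≤ ζ) (hx : 0 ≤ x) :
    Summable (fun k : ℕ => x ^ (2 * k) / (2 * k).factorial * ((k : ℝ) + 1) ^ (-ζ)) := by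
  refine Summable.of_nonneg_of_le (fun k => by positivity) (fun k => ?_) (hasSum_cosh x).summable
  exact mul_le_of_le_one_right (by positivity)
    (rpow_le_one_of_one_le_of_nonpos (by linarith [k.cast_nonneg (α := ℝ)]) (by linarith))

theorem weighted_cosh_series_le {ζ : ℝ} (hζ : 0 ≤ ζ) :
    ∃ C : ℝ, 0 < C ∧ ∀ x : ℝ, 0 ≤ x →
      ∑' k : ℕ, x ^ (2 * k) / ((2 * k).factorial : ℝ) * ((k : ℝ) + 1) ^ (-ζ) ≤
        C * ((1 + x) ^ (-ζ) * exp x) := by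
  obtain ⟨n, hn⟩ := exists_nat_ge ζ
  refine ⟨(1 + 2 ^ n) + 2 ^ n * (n + 2) ^ n, by positivity, fun x hx => ?_⟩
  have h2 : Function.Injective (fun k : ℕ => 2 * k) := fun a b h => by simpa using h
  have h2n : Function.Injective (fun k : ℕ => 2 * k + n) := fun a b h => by simpa using h
  obtain ⟨hs1, hb1⟩ := tsum_pow_div_factorial_comp_le_exp hx h2
  obtain ⟨hs2, hb2⟩ := tsum_pow_div_factorial_comp_le_exp hx h2n
  have hterm : ∀ k : ℕ, x ^ (2 * k) / ((2 * k).factorial : ℝ) * ((k : ℝ) + 1) ^ (-ζ) ≤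
      (1 + x) ^ (-ζ) * ((1 + 2 ^ n) * (x ^ (2 * k) / ((2 * k).factorial : ℝ)) +
        2 ^ n * (n + 2) ^ n * (x ^ (2 * k + n) / ((2 * k + n).factorial : ℝ))) := by
    intro k
    have hk : (0 : ℝ) < (k : ℝ) + 1 := by positivity
    have hratio : ((1 + x) / (k + 1)) ^ ζ ≤ 1 + 2 ^ n + 2 ^ n * (x ^ n / ((k : ℝ) + 1) ^ n) := by
      have h1 : ((1 + x) / ((k : ℝ) + 1)) ^ ζ ≤ 1 + ((1 + x) / (k + 1)) ^ n := by
        rcases le_total ((1 + x) / ((k : ℝ) + 1)) 1 with h | h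
        · have := rpow_le_one (z := ζ) (by positivity) h hζ
          have : 0 ≤ ((1 + x) / ((k : ℝ) + 1)) ^ n := by positivity
          linarith
        · have := rpow_le_rpow_of_exponent_le h hn
          rw [rpow_natCast] at this
          linarith
      have h3 : (1 + x) ^ n ≤ 2 ^ n * (1 + x ^ n) := by
        have := add_pow_le (zero_le_one (α := ℝ)) hx n
        rw [one_pow] at this
        refine this.trans ?_
        gcongr
        · norm_num
        · omega
      have h4 : ((1 + x) / ((k : ℝ) + 1)) ^ n ≤ 2 ^ n + 2 ^ n * (x ^ n / ((k : ℝ) + 1) ^ n) := by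
        rw [div_pow]
        calc (1 + x) ^ n / ((k : ℝ) + 1) ^ n ≤ 2 ^ n * (1 + x ^ n) / ((k : ℝ) + 1) ^ n := by gcongr
          _ = 2 ^ n * (1 / ((k : ℝ) + 1) ^ n) + 2 ^ n * (x ^ n / ((k : ℝ) + 1) ^ n) := by ring
          _ ≤ _ := by
            gcongr
            refine mul_le_of_le_one_right (by positivity) ?_
            rw [div_le_one (by positivity)]
            exact one_le_pow₀ (by linarith [k.cast_nonneg (α := ℝ)])
      linarith
    have hfac : x ^ (2 * k) / ((2 * k).factorial : ℝ) * (x ^ n / ((k : ℝ) + 1) ^ n) ≤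
        (n + 2) ^ n * (x ^ (2 * k + n) / ((2 * k + n).factorial : ℝ)) := by
      have h1 : ((2 * k + n).factorial : ℝ) ≤
          (2 * k).factorial * ((n + 2) ^ n * ((k : ℝ) + 1) ^ n) := by
        rw [← Nat.factorial_mul_ascFactorial, ← mul_pow]
        push_cast
        gcongr
        have : ((2 * k + 1).ascFactorial n : ℝ) ≤ ((2 * k + n : ℕ) : ℝ) ^ n := by
          exact_mod_cast Nat.ascFactorial_le_pow_add (2 * k) n
        refine this.trans ?_
        push_cast
        gcongr
        nlinarith [mul_nonneg (n.cast_nonneg (α := ℝ)) (k.cast_nonneg (α := ℝ))]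
      rw [div_mul_div_comm, ← pow_add, ← mul_div_assoc, div_le_div_iff₀ (by positivity)
        (by positivity)]
      calc _ ≤ x ^ (2 * k + n) * ((2 * k).factorial * ((n + 2) ^ n * ((k : ℝ) + 1) ^ n)) := by
            gcongr
        _ = _ := by ring
    have e1 : ((k : ℝ) + 1) ^ (-ζ) = (1 + x) ^ (-ζ) * ((1 + x) / (k + 1)) ^ ζ := by
      rw [div_rpow (by positivity) hk.le, rpow_neg hk.le, rpow_neg (by positivity)]
      have : (1 + x) ^ ζ ≠ 0 := by positivity
      field_simp
    rw [e1, mul_left_comm]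
    gcongr
    calc _ ≤ x ^ (2 * k) / ((2 * k).factorial : ℝ) *
          (1 + 2 ^ n + 2 ^ n * (x ^ n / ((k : ℝ) + 1) ^ n)) := by gcongr
      _ = (1 + 2 ^ n) * (x ^ (2 * k) / ((2 * k).factorial : ℝ)) +
          2 ^ n * (x ^ (2 * k) / ((2 * k).factorial : ℝ) * (x ^ n / ((k : ℝ) + 1) ^ n)) := by ring
      _ ≤ _ := by
        rw [mul_assoc (2 ^ n)]
        gcongr
  have hs1' := hs1.mul_left (1 + 2 ^ n : ℝ)
  have hs2' := hs2.mul_left (2 ^ n * (n + 2) ^ n : ℝ)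
  refine ((summable_weighted_cosh_series hζ hx).tsum_le_tsum hterm
    ((hs1'.add hs2').mul_left ((1 + x) ^ (-ζ)))).trans ?_
  rw [tsum_mul_left, hs1'.tsum_add hs2', tsum_mul_left, tsum_mul_left]
  calc _ ≤ (1 + x) ^ (-ζ) * ((1 + 2 ^ n) * exp x + 2 ^ n * (n + 2) ^ n * exp x) := by gcongr
    _ = _ := by ring

theorem le_weighted_cosh_series {ζ x : ℝ} (hζ : 0 ≤ ζ) (hx : 0 ≤ x) :
    (1 / 2) * ((1 + x) ^ (-ζ) * exp x) ≤
      ∑' k : ℕ, x ^ (2 * k) / ((2 * k).factorial : ℝ) * ((k : ℝ) + 1) ^ (-ζ) := by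
  have hm : 0 < 1 + x := by linarith
  -- tangent line of `y ↦ y ^ (-ζ)` at `1 + x`
  have htan : ∀ k : ℕ, (1 + x) ^ (-ζ) * (1 + ζ - ζ * ((k + 1) / (1 + x))) ≤
      ((k : ℝ) + 1) ^ (-ζ) := by
    intro k
    have hk : (0 : ℝ) < (k : ℝ) + 1 := by positivity
    have e1 : ((k : ℝ) + 1) ^ (-ζ) = (1 + x) ^ (-ζ) * ((k + 1) / (1 + x)) ^ (-ζ) := by
      rw [← mul_rpow hm.le (by positivity)]
      congr 1
      field_simp
    rw [e1]
    gcongr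
    have hu : 0 < ((k : ℝ) + 1) / (1 + x) := by positivity
    rw [rpow_def_of_pos hu]
    have h1 := add_one_le_exp (log (((k : ℝ) + 1) / (1 + x)) * -ζ)
    have h2 := mul_le_mul_of_nonneg_left (log_le_sub_one_of_pos hu) hζ
    linarith
  have hc := hasSum_cosh x
  have hkc : HasSum (fun k : ℕ => (2 * k : ℝ) * (x ^ (2 * k) / ((2 * k).factorial : ℝ)))
      (x * sinh x) := by
    rw [← hasSum_nat_add_iff' 1]
    simp only [Finset.range_one, Finset.sum_singleton, CharP.cast_eq_zero, mul_zero, zero_mul,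
      sub_zero]
    refine Eq.subst (motive := fun f => HasSum f (x * sinh x)) (funext fun k => ?_)
      ((hasSum_sinh x).mul_left x)
    rw [show 2 * (k + 1) = 2 * k + 1 + 1 by ring, Nat.factorial_succ (2 * k + 1)]
    push_cast
    field_simp
    ring
  have hlow := ((hc.mul_left (1 + ζ - ζ / (1 + x))).sub (hkc.mul_left (ζ / (2 * (1 + x))))).mul_left
    ((1 + x) ^ (-ζ))
  have hle := hasSum_le (fun k => ?_) hlow (summable_weighted_cosh_series hζ hx).hasSum
  · refine le_trans ?_ hle
    rw [mul_left_comm]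
    gcongr
    have hcosh : exp x / 2 ≤ cosh x := by
      rw [cosh_eq]; linarith [exp_pos (-x)]
    have hsc : sinh x ≤ cosh x := sinh_lt_cosh x |>.le
    have : ζ / (2 * (1 + x)) * (x * sinh x) ≤ ζ * x / (1 + x) * cosh x := by
      rw [show ζ / (2 * (1 + x)) * (x * sinh x) = ζ * x / (1 + x) * (sinh x / 2) by
        field_simp]
      gcongr
      linarith [cosh_pos x]
    have e : 1 + ζ - ζ / (1 + x) = 1 + ζ * x / (1 + x) := by field_simp; ring
    rw [e]
    linarith
  · have := mul_le_mul_of_nonneg_left (htan k)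
      (show 0 ≤ x ^ (2 * k) / ((2 * k).factorial : ℝ) by positivity)
    refine le_trans (le_of_eq ?_) this
    field_simp
    ring

theorem besselI_term_eq {ζ x : ℝ} (hx : 0 < x) (k : ℕ) :
    (x / 2) ^ (2 * (k : ℝ) + (ζ - 1 / 2)) /
        ((Nat.factorial k : ℝ) * Gamma ((k : ℝ) + (ζ - 1 / 2) + 1)) =
      (x / 2) ^ (ζ - 1 / 2) / √π *
        (x ^ (2 * k) / (2 * k).factorial * (Gamma (k + 1 / 2) / Gamma (k + 1 / 2 + ζ))) := by
  have hdup := Gamma_mul_Gamma_add_half ((k : ℝ) + 1 / 2)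
  rw [show (k : ℝ) + 1 / 2 + 1 / 2 = k + 1 by ring,
    show 2 * ((k : ℝ) + 1 / 2) = ((2 * k : ℕ) : ℝ) + 1 by push_cast; ring, Gamma_nat_eq_factorial,
    Gamma_nat_eq_factorial, show 1 - (((2 * k : ℕ) : ℝ) + 1) = -((2 * k : ℕ) : ℝ) by ring,
    rpow_neg zero_le_two, rpow_natCast] at hdup
  have e1 : (x / 2) ^ (2 * (k : ℝ) + (ζ - 1 / 2)) =
      x ^ (2 * k) / 2 ^ (2 * k) * (x / 2) ^ (ζ - 1 / 2) := by
    rw [rpow_add (by positivity), show 2 * (k : ℝ) = ((2 * k : ℕ) : ℝ) by push_cast; ring,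
      rpow_natCast, div_pow]
  have e2 : Gamma (k + 1 / 2) = (2 * k).factorial * (2 ^ (2 * k))⁻¹ * √π / k.factorial := by
    rw [eq_div_iff (by positivity), hdup]
  rw [e1, e2, show (k : ℝ) + (ζ - 1 / 2) + 1 = k + 1 / 2 + ζ by ring]
  have : √π ≠ 0 := by positivity
  field_simp

theorem summable_besselI_term {ζ x : ℝ} (hζ : 0 ≤ ζ) (hx : 0 < x) :
    Summable fun k : ℕ => x ^ (2 * k) / (2 * k).factorial *
      (Gamma (k + 1 / 2) / Gamma (k + 1 / 2 + ζ)) := by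
  obtain ⟨c, C, hc, hC, h⟩ := Gamma_ratio_bounds hζ
  refine Summable.of_nonneg_of_le (fun k => ?_) (fun k => ?_)
    ((summable_weighted_cosh_series hζ hx.le).mul_left C)
  · have := (mul_nonneg hc.le (by positivity)).trans (h k).1
    positivity
  · rw [mul_left_comm]
    gcongr
    exact (h k).2

theorem besselI_bounds {ζ : ℝ} (hζ : 0 ≤ ζ) :
    ∃ c C : ℝ, 0 < c ∧ 0 < C ∧ ∀ x : ℝ, 0 < x →
      c * ((x / 2) ^ (ζ - 1 / 2) * (1 + x) ^ (-ζ) * exp x) ≤ besselI (ζ - 1 / 2) x ∧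
      besselI (ζ - 1 / 2) x ≤ C * ((x / 2) ^ (ζ - 1 / 2) * (1 + x) ^ (-ζ) * exp x) := by
  obtain ⟨c, C, hc, hC, h⟩ := Gamma_ratio_bounds hζ
  obtain ⟨D, hD, hD'⟩ := weighted_cosh_series_le hζ
  have hπ : 0 < √π := by positivity
  refine ⟨c / 2 / √π, C * D / √π, by positivity, by positivity, fun x hx => ?_⟩
  have hw := summable_weighted_cosh_series hζ hx.le
  have hb := summable_besselI_term hζ hx
  simp only [besselI, besselI_term_eq hx]
  rw [tsum_mul_left]
  have hx2 : 0 ≤ (x / 2) ^ (ζ - 1 / 2) / √π := by positivity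
  constructor
  · have h1 : c * (1 / 2 * ((1 + x) ^ (-ζ) * exp x)) ≤ ∑' k : ℕ, x ^ (2 * k) / (2 * k).factorial *
        (Gamma (k + 1 / 2) / Gamma (k + 1 / 2 + ζ)) := by
      refine (mul_le_mul_of_nonneg_left (le_weighted_cosh_series hζ hx.le) hc.le).trans ?_
      rw [← tsum_mul_left]
      refine (hw.mul_left c).tsum_le_tsum (fun k => ?_) hb
      rw [mul_left_comm]
      gcongr
      exact (h k).1
    refine le_trans (le_of_eq ?_) (mul_le_mul_of_nonneg_left h1 hx2)
    field_simp
  · have h1 : ∑' k : ℕ, x ^ (2 * k) / (2 * k).factorial *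
        (Gamma (k + 1 / 2) / Gamma (k + 1 / 2 + ζ)) ≤ C * (D * ((1 + x) ^ (-ζ) * exp x)) := by
      refine le_trans ?_ (mul_le_mul_of_nonneg_left (hD' x hx.le) hC.le)
      rw [← tsum_mul_left]
      refine hb.tsum_le_tsum (fun k => ?_) (hw.mul_left C)
      rw [mul_left_comm]
      gcongr
      exact (h k).2
    refine (mul_le_mul_of_nonneg_left h1 hx2).trans (le_of_eq ?_)
    field_simp

theorem besselHeat_bounds {ζ : ℝ} (hζ : 0 ≤ ζ) :
    ∃ c C : ℝ, 0 < c ∧ 0 < C ∧ ∀ τ r s : ℝ, 0 < τ → 0 < r → 0 < s →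
      c * (τ ^ (-(1 / 2) : ℝ) * (2 * τ + r * s) ^ (-ζ) * exp (-(r - s) ^ 2 / (4 * τ))) ≤
        besselHeat ζ τ r s ∧
      besselHeat ζ τ r s ≤
        C * (τ ^ (-(1 / 2) : ℝ) * (2 * τ + r * s) ^ (-ζ) * exp (-(r - s) ^ 2 / (4 * τ))) := by
  obtain ⟨c, C, hc, hC, h⟩ := besselI_bounds hζ
  refine ⟨c * 2 ^ (-ζ), C * 2 ^ (-ζ), by positivity, by positivity, fun τ r s hτ hr hs => ?_⟩
  have hrs : 0 < r * s := by positivity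
  obtain ⟨h1, h2⟩ := h (r * s / (2 * τ)) (by positivity)
  have hA : 0 ≤ (r * s) ^ ((1 : ℝ) / 2 - ζ) / (2 * τ) * exp (-(r ^ 2 + s ^ 2) / (4 * τ)) := by
    positivity
  have key : (r * s) ^ ((1 : ℝ) / 2 - ζ) / (2 * τ) * exp (-(r ^ 2 + s ^ 2) / (4 * τ)) *
      ((r * s / (2 * τ) / 2) ^ (ζ - 1 / 2) * (1 + r * s / (2 * τ)) ^ (-ζ) *
        exp (r * s / (2 * τ))) = 2 ^ (-ζ) *
      (τ ^ (-(1 / 2) : ℝ) * (2 * τ + r * s) ^ (-ζ) * exp (-(r - s) ^ 2 / (4 * τ))) := by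
    have e1 : exp (-(r - s) ^ 2 / (4 * τ)) =
        exp (-(r ^ 2 + s ^ 2) / (4 * τ)) * exp (r * s / (2 * τ)) := by
      rw [← exp_add]; congr 1; field_simp; ring
    have e2 : (1 + r * s / (2 * τ)) ^ (-ζ) = (2 * τ + r * s) ^ (-ζ) * (2 ^ ζ * τ ^ ζ) := by
      rw [show 1 + r * s / (2 * τ) = (2 * τ + r * s) / (2 * τ) by field_simp,
        div_rpow (by positivity) (by positivity), rpow_neg (by positivity : 0 ≤ 2 * τ),
        mul_rpow (by positivity) (by positivity)]
      field_simp
    have hsplit : ∀ y : ℝ, 0 < y → y ^ (-(ζ - 1 / 2)) = y ^ (-ζ) * y ^ (1 / 2 : ℝ) := by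
      intro y hy
      rw [← rpow_add hy]; congr 1; ring
    have e3 : (r * s / (2 * τ) / 2) ^ (ζ - 1 / 2) =
        (r * s) ^ (ζ - 1 / 2) * (2 * 2 ^ (-ζ) * 2 ^ (-ζ) * (τ ^ (-ζ) * τ ^ (1 / 2 : ℝ))) := by
      rw [show r * s / (2 * τ) / 2 = r * s * (2 * (2 * τ))⁻¹ by field_simp,
        mul_rpow (by positivity) (by positivity), inv_rpow (by positivity),
        ← rpow_neg (by positivity), mul_rpow two_pos.le (by positivity),
        mul_rpow two_pos.le hτ.le, hsplit 2 two_pos, hsplit τ hτ]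
      have : (2 : ℝ) ^ (1 / 2 : ℝ) * 2 ^ (1 / 2 : ℝ) = 2 := by
        rw [← rpow_add two_pos]; norm_num
      linear_combination (r * s) ^ (ζ - 1 / 2) * 2 ^ (-ζ) * 2 ^ (-ζ) * τ ^ (-ζ) *
        τ ^ (1 / 2 : ℝ) * this
    have e4 : (r * s) ^ ((1 : ℝ) / 2 - ζ) * (r * s) ^ (ζ - 1 / 2) = 1 := by
      rw [← rpow_add hrs]; norm_num
    have e5 : τ ^ (1 / 2 : ℝ) = τ * τ ^ (-(1 / 2) : ℝ) := by
      nth_rw 2 [← rpow_one τ]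
      rw [← rpow_add hτ]; norm_num
    have e6 : τ ^ (-ζ) * τ ^ ζ = 1 := by rw [← rpow_add hτ]; norm_num
    have e7 : (2 : ℝ) ^ (-ζ) * 2 ^ ζ = 1 := by rw [← rpow_add two_pos]; norm_num
    rw [e1, e2, e3, e5]
    calc _ = ((r * s) ^ ((1 : ℝ) / 2 - ζ) * (r * s) ^ (ζ - 1 / 2)) * (τ ^ (-ζ) * τ ^ ζ) *
          ((2 : ℝ) ^ (-ζ) * 2 ^ ζ) * (τ / τ) * (2 ^ (-ζ) *
      (τ ^ (-(1 / 2) : ℝ) * (2 * τ + r * s) ^ (-ζ) *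
        (exp (-(r ^ 2 + s ^ 2) / (4 * τ)) * exp (r * s / (2 * τ))))) := by ring
      _ = _ := by rw [e4, e6, e7, div_self hτ.ne']; ring
  unfold besselHeat
  constructor
  · refine le_trans (le_of_eq ?_) (mul_le_mul_of_nonneg_left h1 hA)
    linear_combination -c * key
  · refine (mul_le_mul_of_nonneg_left h2 hA).trans (le_of_eq ?_)
    linear_combination C * key

/-- `μ` is a probability law on `(0, ∞)` with Laplace transform `l ↦ exp (-t * l ^ β)`. -/
structure IsStableLaw (β t : ℝ) (μ : Measure ℝ) : Prop where
  prob : IsProbabilityMeasure μ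
  pos : ∀ᵐ τ ∂μ, 0 < τ
  laplace : ∀ l, 0 ≤ l → ∫ τ, exp (-τ * l) ∂μ = exp (-t * l ^ β)

theorem half_le_one_sub_exp_neg {u : ℝ} (h0 : 0 ≤ u) (h1 : u ≤ 1) : u / 2 ≤ 1 - exp (-u) := by
  have h2 : exp (-u) ≤ (1 + u)⁻¹ := by
    rw [exp_neg]
    exact inv_anti₀ (by linarith) (by linarith [add_one_le_exp u])
  have h3 : (1 + u)⁻¹ ≤ 1 - u / 2 := by
    rw [inv_le_iff_one_le_mul₀ (by linarith)]
    nlinarith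
  linarith

theorem half_le_one_sub_exp_neg_of_one_le {u : ℝ} (h1 : 1 ≤ u) : 1 / 2 ≤ 1 - exp (-u) := by
  have := half_le_one_sub_exp_neg zero_le_one le_rfl
  have : exp (-u) ≤ exp (-1) := exp_le_exp.2 (by linarith)
  linarith

namespace IsStableLaw

variable {β t : ℝ} {μ : Measure ℝ}

theorem integrable_exp (h : IsStableLaw β t μ) {l : ℝ} (hl : 0 ≤ l) :
    Integrable (fun τ => exp (-τ * l)) μ := by
  have := h.prob
  refine Integrable.of_bound (by fun_prop) 1 ?_
  filter_upwards [h.pos] with τ hτ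
  rw [norm_of_nonneg (exp_pos _).le, exp_le_one_iff]
  nlinarith

theorem integrable_one_sub_exp (h : IsStableLaw β t μ) {l : ℝ} (hl : 0 ≤ l) :
    Integrable (fun τ => 1 - exp (-τ * l)) μ := by
  have := h.prob
  exact (integrable_const 1).sub (h.integrable_exp hl)

theorem integral_one_sub_exp (h : IsStableLaw β t μ) {l : ℝ} (hl : 0 ≤ l) :
    ∫ τ, (1 - exp (-τ * l)) ∂μ = 1 - exp (-t * l ^ β) := by
  have := h.prob
  rw [integral_sub (integrable_const 1) (h.integrable_exp hl), h.laplace l hl]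
  simp

theorem integral_one_sub_exp_le (h : IsStableLaw β t μ) {x : ℝ} (hx : 0 < x) :
    ∫ τ, (1 - exp (-τ * x⁻¹)) ∂μ ≤ t * x ^ (-β) := by
  rw [h.integral_one_sub_exp (by positivity), inv_rpow hx.le, ← rpow_neg hx.le]
  linarith [add_one_le_exp (-t * x ^ (-β))]

theorem measureReal_Ioi_le (h : IsStableLaw β t μ) {x : ℝ} (hx : 0 < x) :
    μ.real (Ioi x) ≤ 2 * (t * x ^ (-β)) := by
  have := h.prob
  calc μ.real (Ioi x) = ∫ τ, (Ioi x).indicator 1 τ ∂μ := (integral_indicator_one measurableSet_Ioi).symm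
    _ ≤ ∫ τ, 2 * (1 - exp (-τ * x⁻¹)) ∂μ := by
      refine integral_mono_ae ((integrable_const 1).indicator measurableSet_Ioi)
        ((h.integrable_one_sub_exp (by positivity)).const_mul 2) ?_
      filter_upwards [h.pos] with τ hτ
      by_cases hτx : x < τ
      · have := half_le_one_sub_exp_neg_of_one_le (u := τ * x⁻¹) (by
          rw [← div_eq_mul_inv, one_le_div hx]; exact hτx.le)
        simp only [mem_Ioi, hτx, indicator_of_mem, Pi.one_apply]
        rw [neg_mul]
        linarith
      · simp only [mem_Ioi, hτx, not_false_eq_true, indicator_of_notMem]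
        have : exp (-τ * x⁻¹) ≤ 1 := by
          rw [exp_le_one_iff, neg_mul, neg_nonpos]
          positivity
        linarith
    _ = 2 * ∫ τ, (1 - exp (-τ * x⁻¹)) ∂μ := integral_const_mul _ _
    _ ≤ _ := by gcongr; exact h.integral_one_sub_exp_le hx

theorem le_measureReal_Ioi (hβ : 0 < β) (hβ1 : β < 1) :
    ∃ c : ℝ, 0 < c ∧ ∀ (t x : ℝ) (μ : Measure ℝ), IsStableLaw β t μ → 0 < t → 0 < x →
      t * x ^ (-β) ≤ 1 → c * (t * x ^ (-β)) ≤ μ.real (Ioi x) := by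
  obtain ⟨ε, hε, hε1, hεβ⟩ : ∃ ε : ℝ, 0 < ε ∧ ε ≤ 1 ∧ 8 * ε ≤ ε ^ β := by
    refine ⟨(1 / 8) ^ (1 / (1 - β)), by positivity,
      rpow_le_one (by norm_num) (by norm_num) (one_div_nonneg.2 (by linarith)), le_of_eq ?_⟩
    have h1 : ((1 / 8 : ℝ) ^ (1 / (1 - β))) ^ (1 - β) = 1 / 8 := by
      rw [← rpow_mul (by norm_num), one_div_mul_cancel (by linarith), rpow_one]
    have hy : (0 : ℝ) < (1 / 8 : ℝ) ^ (1 / (1 - β)) := by positivity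
    rw [rpow_sub hy, rpow_one, div_eq_iff (by positivity)] at h1
    linarith
  refine ⟨2 * ε, by positivity, fun t x μ h ht hx htx => ?_⟩
  have := h.prob
  have hlow : t * x ^ (-β) * (4 * ε) ≤ 1 - exp (-t * (ε * x⁻¹) ^ β) := by
    have hw : t * (ε * x⁻¹) ^ β = t * x ^ (-β) * ε ^ β := by
      rw [mul_rpow hε.le (by positivity), inv_rpow hx.le, ← rpow_neg hx.le]
      ring
    have hw0 : 0 ≤ t * x ^ (-β) := by positivity
    have := half_le_one_sub_exp_neg (u := t * (ε * x⁻¹) ^ β) (by positivity) (by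
      rw [hw]
      exact mul_le_one₀ htx (by positivity) (rpow_le_one hε.le hε1 hβ.le))
    rw [neg_mul]
    refine le_trans ?_ this
    rw [hw]
    nlinarith
  have hup : 1 - exp (-t * (ε * x⁻¹) ^ β) ≤ μ.real (Ioi x) + 2 * ε * (t * x ^ (-β)) := by
    rw [← h.integral_one_sub_exp (by positivity)]
    calc _ ≤ ∫ τ, ((Ioi x).indicator 1 τ + 2 * ε * (1 - exp (-τ * x⁻¹))) ∂μ := by
          refine integral_mono_ae (h.integrable_one_sub_exp (by positivity))
            (((integrable_const 1).indicator measurableSet_Ioi).add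
              ((h.integrable_one_sub_exp (by positivity)).const_mul _)) ?_
          filter_upwards [h.pos] with τ hτ
          have hpos : exp (-τ * (ε * x⁻¹)) > 0 := exp_pos _
          by_cases hτx : x < τ
          · simp only [mem_Ioi, hτx, indicator_of_mem, Pi.one_apply]
            have : exp (-τ * x⁻¹) ≤ 1 := by
              rw [exp_le_one_iff, neg_mul, neg_nonpos]
              positivity
            nlinarith
          · simp only [mem_Ioi, hτx, not_false_eq_true, indicator_of_notMem]
            have h1 := half_le_one_sub_exp_neg (u := τ * x⁻¹) (by positivity) (by
              rw [← div_eq_mul_inv, div_le_one hx]; exact not_lt.1 hτx)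
            have h2 := add_one_le_exp (-τ * (ε * x⁻¹))
            rw [← neg_mul] at h1
            nlinarith
      _ = μ.real (Ioi x) + 2 * ε * ∫ τ, (1 - exp (-τ * x⁻¹)) ∂μ := by
          have hi : Integrable ((Ioi x).indicator (1 : ℝ → ℝ)) μ :=
            (integrable_const 1).indicator measurableSet_Ioi
          rw [integral_add hi
            ((h.integrable_one_sub_exp (by positivity)).const_mul _),
            integral_indicator_one measurableSet_Ioi, integral_const_mul]
      _ ≤ _ := by gcongr; exact h.integral_one_sub_exp_le hx
  nlinarith

theorem le_measureReal_Ioc (hβ : 0 < β) (hβ1 : β < 1) :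
    ∃ c B : ℝ, 0 < c ∧ 0 < B ∧ ∀ (t x : ℝ) (μ : Measure ℝ), IsStableLaw β t μ → 0 < t → 0 < x →
      t * x ^ (-β) ≤ 1 → c * (t * x ^ (-β)) ≤ μ.real (Ioc x (B * x)) := by
  obtain ⟨c, hc, h⟩ := le_measureReal_Ioi hβ hβ1
  refine ⟨c / 2, (c / 4) ^ (-(1 / β)), by positivity, by positivity,
    fun t x μ hμ ht hx htx => ?_⟩
  have := hμ.prob
  set B := (c / 4) ^ (-(1 / β)) with hB
  have hB0 : 0 < B := by positivity
  have hBβ : B ^ (-β) = c / 4 := by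
    rw [hB, ← rpow_mul (by positivity), show -(1 / β) * -β = 1 by field_simp, rpow_one]
  have h1 := h t x μ hμ ht hx htx
  have h2 := hμ.measureReal_Ioi_le (x := B * x) (by positivity)
  rw [mul_rpow hB0.le hx.le, hBβ] at h2
  have h3 : μ.real (Ioi x) ≤ μ.real (Ioc x (B * x)) + μ.real (Ioi (B * x)) := by
    refine (measureReal_mono ?_).trans (measureReal_union_le _ _)
    intro y hy
    rcases le_or_gt y (B * x) with h | h
    · exact Or.inl ⟨hy, h⟩
    · exact Or.inr h
  linarith

theorem integrable_rpow_neg (h : IsStableLaw β t μ) (hβ : 0 < β) (ht : 0 < t) {a : ℝ}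
    (ha : 0 < a) :
    Integrable (fun τ => τ ^ (-a)) μ ∧
      ∫ τ, τ ^ (-a) ∂μ = t ^ (-a / β) * (1 / β) * Gamma (a / β) / Gamma a := by
  have := h.prob
  have hΓ := Gamma_pos_of_pos ha
  have hΓ' : 0 < Gamma (a / β) := Gamma_pos_of_pos (by positivity)
  have hval : ∫⁻ τ, ENNReal.ofReal (Gamma a * τ ^ (-a)) ∂μ =
      ENNReal.ofReal (t ^ (-a / β) * (1 / β) * Gamma (a / β)) := by
    calc _ = ∫⁻ τ, (∫⁻ l in Ioi (0 : ℝ), ENNReal.ofReal (l ^ (a - 1) * exp (-τ * l))) ∂μ := by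
          refine lintegral_congr_ae ?_
          filter_upwards [h.pos] with τ hτ
          have hi := integrableOn_rpow_mul_exp_neg_mul_rpow (s := a - 1) (p := 1) (by linarith)
            one_pos hτ
          simp only [rpow_one] at hi
          rw [← ofReal_integral_eq_lintegral_ofReal hi]
          · congr 1
            have := integral_rpow_mul_exp_neg_mul_Ioi ha hτ
            simp only [neg_mul]
            rw [this, one_div, inv_rpow hτ.le, rpow_neg hτ.le]
            ring
          · filter_upwards [ae_restrict_mem measurableSet_Ioi] with l hl
            have : (0 : ℝ) < l := hl
            positivity
      _ = ∫⁻ l in Ioi (0 : ℝ), ∫⁻ τ, ENNReal.ofReal (l ^ (a - 1) * exp (-τ * l)) ∂μ := by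
          apply lintegral_lintegral_swap
          fun_prop
      _ = ∫⁻ l in Ioi (0 : ℝ), ENNReal.ofReal (l ^ (a - 1) * exp (-t * l ^ β)) := by
          refine setLIntegral_congr_fun measurableSet_Ioi fun l hl => ?_
          have hl : (0 : ℝ) < l := hl
          rw [← ofReal_integral_eq_lintegral_ofReal ((h.integrable_exp hl.le).const_mul _)
            (Eventually.of_forall fun τ => by positivity), integral_const_mul, h.laplace l hl.le]
      _ = _ := by
          rw [← ofReal_integral_eq_lintegral_ofReal
            (integrableOn_rpow_mul_exp_neg_mul_rpow (by linarith) hβ ht),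
            integral_rpow_mul_exp_neg_mul_rpow hβ (by linarith) ht, sub_add_cancel]
          filter_upwards [ae_restrict_mem measurableSet_Ioi] with l hl
          have : (0 : ℝ) < l := hl
          positivity
  have hnn : 0 ≤ᵐ[μ] fun τ => Gamma a * τ ^ (-a) := by
    filter_upwards [h.pos] with τ hτ
    positivity
  have hm : AEStronglyMeasurable (fun τ => Gamma a * τ ^ (-a)) μ := by fun_prop
  have hint : Integrable (fun τ => Gamma a * τ ^ (-a)) μ := by
    refine ⟨hm, ?_⟩
    rw [hasFiniteIntegral_iff_ofReal hnn, hval]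
    exact ENNReal.ofReal_lt_top
  have hval' : ∫ τ, Gamma a * τ ^ (-a) ∂μ = t ^ (-a / β) * (1 / β) * Gamma (a / β) := by
    rw [integral_eq_lintegral_of_nonneg_ae hnn hm, hval, ENNReal.toReal_ofReal (by positivity)]
  refine ⟨?_, ?_⟩
  · have := hint.const_mul (Gamma a)⁻¹
    refine this.congr (Eventually.of_forall fun τ => ?_)
    simp only
    rw [inv_mul_cancel_left₀ hΓ.ne']
  · rw [integral_const_mul] at hval'
    rw [eq_div_iff hΓ.ne', ← hval', mul_comm]

end IsStableLaw

/-- The two-sided model `τ ^ (-1/2) (2τ + rs) ^ (-ζ) exp (-(r - s)² / (4τ))` of `besselHeat`. -/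
noncomputable def heatProfile (ζ r s τ : ℝ) : ℝ :=
  τ ^ (-(1 / 2) : ℝ) * (2 * τ + r * s) ^ (-ζ) * exp (-(r - s) ^ 2 / (4 * τ))

/-- The two-sided model of `subKernel`. -/
noncomputable def stableProfile (ζ α t r s : ℝ) : ℝ :=
  t * (t ^ (1 / α) + |r - s|) ^ (-(1 + α)) * (t ^ (1 / α) + r + s) ^ (-(2 * ζ))

theorem measurable_heatProfile (ζ r s : ℝ) : Measurable (heatProfile ζ r s) := by
  unfold heatProfile
  fun_prop

theorem rpow_neg_two_mul_eq {y : ℝ} (hy : 0 ≤ y) (p : ℝ) : y ^ (-(2 * p)) = (y ^ 2) ^ (-p) := by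
  rw [← rpow_natCast, ← rpow_mul hy]
  congr 1
  push_cast
  ring

theorem rpow_neg_le_of_le_mul {x y K p : ℝ} (hx : 0 < x) (hy : 0 < y) (hK : 0 < K) (hp : 0 ≤ p)
    (h : y ≤ K * x) : x ^ (-p) ≤ K ^ p * y ^ (-p) := by
  have h1 : (K * x) ^ (-p) ≤ y ^ (-p) := rpow_le_rpow_of_nonpos hy h (by linarith)
  have h2 : x ^ (-p) = K ^ p * (K * x) ^ (-p) := by
    rw [mul_rpow hK.le hx.le, ← mul_assoc, ← rpow_add hK]
    simp
  rw [h2]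
  gcongr

theorem stableProfile_lower {ζ α : ℝ} (hζ : 0 ≤ ζ) (hα0 : 0 < α) (hα2 : α < 2) :
    ∃ c : ℝ, 0 < c ∧ ∀ (t r s : ℝ) (μ : Measure ℝ), IsStableLaw (α / 2) t μ → 0 < t → 0 < r →
      0 < s → Integrable (heatProfile ζ r s) μ →
      c * stableProfile ζ α t r s ≤ ∫ τ, heatProfile ζ r s τ ∂μ := by
  obtain ⟨c, B, hc, hB, h⟩ := IsStableLaw.le_measureReal_Ioc (β := α / 2) (by linarith)
    (by linarith)
  refine ⟨c * (B ^ (-(1 / 2) : ℝ) * ((2 * B + 1) ^ ζ)⁻¹ * exp (-(1 / 4))), by positivity,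
    fun t r s μ hμ ht hr hs hint => ?_⟩
  have := hμ.prob
  set a := t ^ (1 / α) with ha
  have ha0 : 0 < a := by positivity
  have haα : a ^ α = t := by rw [ha, ← rpow_mul ht.le]; simp [hα0.ne']
  set y := a + |r - s| with hy
  have hy0 : 0 < y := by positivity
  have hya : a ≤ y := by linarith [abs_nonneg (r - s)]
  have hyr : y ≤ a + r + s := by
    have : |r - s| ≤ r + s := abs_le.2 ⟨by linarith, by linarith⟩
    linarith
  have hxβ : (y ^ 2) ^ (-(α / 2)) = y ^ (-α) := by
    rw [← rpow_neg_two_mul_eq hy0.le]; congr 1; ring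
  have htx : t * (y ^ 2) ^ (-(α / 2)) ≤ 1 := by
    rw [hxβ, rpow_neg hy0.le, ← div_eq_mul_inv, div_le_one (by positivity), ← haα]
    exact rpow_le_rpow ha0.le hya hα0.le
  have hmass := h t (y ^ 2) μ hμ ht (by positivity) htx
  set m := B ^ (-(1 / 2) : ℝ) * y⁻¹ * (((2 * B + 1) ^ ζ)⁻¹ * (a + r + s) ^ (-(2 * ζ))) *
    exp (-(1 / 4)) with hm
  have hpoint : ∀ τ ∈ Ioc (y ^ 2) (B * y ^ 2), m ≤ heatProfile ζ r s τ := by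
    intro τ hτ
    have hτ0 : 0 < τ := lt_trans (by positivity) hτ.1
    unfold heatProfile
    have h1 : B ^ (-(1 / 2) : ℝ) * y⁻¹ ≤ τ ^ (-(1 / 2) : ℝ) := by
      have e : y⁻¹ = (y ^ 2) ^ (-(1 / 2) : ℝ) := by
        rw [← rpow_neg_two_mul_eq hy0.le, ← rpow_neg_one]; norm_num
      rw [e, ← mul_rpow hB.le (by positivity)]
      exact rpow_le_rpow_of_nonpos hτ0 hτ.2 (by norm_num)
    have h2 : ((2 * B + 1) ^ ζ)⁻¹ * (a + r + s) ^ (-(2 * ζ)) ≤ (2 * τ + r * s) ^ (-ζ) := by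
      rw [rpow_neg_two_mul_eq (by positivity), ← rpow_neg (by positivity),
        ← mul_rpow (by positivity) (by positivity)]
      refine rpow_le_rpow_of_nonpos (by positivity) ?_ (by linarith)
      have e1 : y ^ 2 ≤ (a + r + s) ^ 2 := pow_le_pow_left₀ hy0.le hyr 2
      have e2 : r * s ≤ (a + r + s) ^ 2 := by nlinarith [mul_pos ha0 hr, mul_pos ha0 hs]
      nlinarith [hτ.2, mul_le_mul_of_nonneg_left e1 hB.le]
    have h3 : exp (-(1 / 4)) ≤ exp (-(r - s) ^ 2 / (4 * τ)) := by
      refine exp_le_exp.2 ?_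
      rw [neg_div, neg_le_neg_iff, div_le_iff₀ (by positivity)]
      have : (r - s) ^ 2 ≤ y ^ 2 := by
        rw [← sq_abs (r - s)]
        exact pow_le_pow_left₀ (abs_nonneg _) (by linarith) 2
      linarith [hτ.1]
    rw [hm]
    gcongr
  have hm0 : 0 ≤ m := by positivity
  calc _ = m * (c * (t * (y ^ 2) ^ (-(α / 2)))) := by
        rw [hm, hxβ]
        unfold stableProfile
        rw [← ha, ← hy, show -(1 + α) = -1 + -α by ring, rpow_add hy0, rpow_neg_one]
        ring
    _ ≤ m * μ.real (Ioc (y ^ 2) (B * y ^ 2)) := by gcongr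
    _ = ∫ τ in Ioc (y ^ 2) (B * y ^ 2), m ∂μ := by
        rw [setIntegral_const, smul_eq_mul, mul_comm]
    _ ≤ ∫ τ in Ioc (y ^ 2) (B * y ^ 2), heatProfile ζ r s τ ∂μ :=
        setIntegral_mono_on (integrable_const m).integrableOn hint.integrableOn measurableSet_Ioc
          hpoint
    _ ≤ _ := by
        refine setIntegral_le_integral hint ?_
        filter_upwards [hμ.pos] with τ hτ
        simp only [heatProfile, Pi.zero_apply]
        positivity

theorem rpow_half_mul_rpow_le_of_le {ζ X q τ : ℝ} (hζ : 0 ≤ ζ) (hX : 0 < X) (hq : 0 ≤ q)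
    (hτ : X ^ 2 ≤ τ) :
    τ ^ (-(1 / 2) : ℝ) * (2 * τ + q) ^ (-ζ) ≤ X⁻¹ * (X ^ 2 + q) ^ (-ζ) := by
  have e : X⁻¹ = (X ^ 2) ^ (-(1 / 2) : ℝ) := by
    rw [← rpow_neg_two_mul_eq hX.le, ← rpow_neg_one]; norm_num
  have hτ0 : 0 < τ := lt_of_lt_of_le (by positivity) hτ
  rw [e]
  gcongr ?_ * ?_
  · exact rpow_le_rpow_of_nonpos (by positivity) hτ (by norm_num)
  · exact rpow_le_rpow_of_nonpos (by positivity) (by linarith) (by linarith)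

theorem rpow_half_mul_rpow_le_of_ge {ζ X q τ : ℝ} (hζ : 0 ≤ ζ) (hX : 0 < X) (hq : 0 ≤ q)
    (hτ0 : 0 < τ) (hτ : τ ≤ X ^ 2) :
    τ ^ (-(1 / 2) : ℝ) * (2 * τ + q) ^ (-ζ) ≤
      X⁻¹ * (X ^ 2 + q) ^ (-ζ) * (τ / X ^ 2) ^ (-(1 / 2 + ζ)) := by
  have e : X⁻¹ = (X ^ 2) ^ (-(1 / 2) : ℝ) := by
    rw [← rpow_neg_two_mul_eq hX.le, ← rpow_neg_one]; norm_num
  have hv : 0 < τ / X ^ 2 := by positivity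
  have hv1 : τ / X ^ 2 ≤ 1 := (div_le_one (by positivity)).2 hτ
  have hX2 : X ^ 2 * (τ / X ^ 2) = τ := by field_simp
  have h1 : (X ^ 2) ^ (-(1 / 2) : ℝ) * (τ / X ^ 2) ^ (-(1 / 2) : ℝ) = τ ^ (-(1 / 2) : ℝ) := by
    rw [← mul_rpow (by positivity) hv.le, hX2]
  have h2 : (2 * τ + q) ^ (-ζ) ≤ (X ^ 2 + q) ^ (-ζ) * (τ / X ^ 2) ^ (-ζ) := by
    rw [← mul_rpow (by positivity) hv.le]
    refine rpow_le_rpow_of_nonpos (by positivity) ?_ (by linarith)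
    rw [add_mul, hX2]
    nlinarith
  rw [neg_add, rpow_add hv, e, ← h1]
  calc _ ≤ (X ^ 2) ^ (-(1 / 2) : ℝ) * (τ / X ^ 2) ^ (-(1 / 2) : ℝ) *
        ((X ^ 2 + q) ^ (-ζ) * (τ / X ^ 2) ^ (-ζ)) := by gcongr
    _ = _ := by ring

theorem exists_rpow_le_mul_exp (p : ℝ) (hp : 0 ≤ p) :
    ∃ K : ℝ, 0 < K ∧ ∀ w : ℝ, 0 < w → w ^ p ≤ K * exp w := by
  obtain ⟨n, hn⟩ := exists_nat_ge p
  refine ⟨1 + n.factorial, by positivity, fun w hw => ?_⟩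
  have h1 : w ^ p ≤ 1 + w ^ n := by
    rcases le_total w 1 with h | h
    · have := rpow_le_one hw.le h hp
      have : 0 ≤ w ^ n := by positivity
      linarith
    · have := rpow_le_rpow_of_exponent_le h hn
      rw [rpow_natCast] at this
      linarith
  have h2 := pow_div_factorial_le_exp w hw.le n
  rw [div_le_iff₀ (by positivity)] at h2
  have h3 : 1 ≤ exp w := one_le_exp hw.le
  linarith

theorem heatProfile_le_one_sub_exp {ζ : ℝ} (hζ : 0 ≤ ζ) :
    ∃ K : ℝ, 0 < K ∧ ∀ r s τ : ℝ, 0 < r → 0 < s → 0 < τ → 0 < |r - s| →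
      heatProfile ζ r s τ ≤ K * (|r - s|⁻¹ * (|r - s| ^ 2 + r * s) ^ (-ζ)) *
        (1 - exp (-τ * (|r - s| ^ 2)⁻¹)) := by
  obtain ⟨K, hK, h⟩ := exists_rpow_le_mul_exp (3 / 2 + ζ) (by linarith)
  refine ⟨2 * (1 + K * 4 ^ (3 / 2 + ζ)), by positivity, fun r s τ hr hs hτ hD => ?_⟩
  unfold heatProfile
  rw [← sq_abs (r - s)]
  set D := |r - s| with hDdef
  have hA : 0 ≤ D⁻¹ * (D ^ 2 + r * s) ^ (-ζ) := by positivity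
  have hK4 : 0 < K * 4 ^ (3 / 2 + ζ) := by positivity
  rw [neg_mul, ← div_eq_mul_inv]
  rcases le_total (D ^ 2) τ with hle | hle
  · have h1 := rpow_half_mul_rpow_le_of_le hζ hD (mul_pos hr hs).le hle
    have h2 : exp (-D ^ 2 / (4 * τ)) ≤ 1 := by
      rw [exp_le_one_iff, neg_div, neg_nonpos]
      positivity
    have h3 := half_le_one_sub_exp_neg_of_one_le (u := τ / D ^ 2)
      ((one_le_div (by positivity)).2 hle)
    calc _ ≤ D⁻¹ * (D ^ 2 + r * s) ^ (-ζ) * 1 := by gcongr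
      _ ≤ D⁻¹ * (D ^ 2 + r * s) ^ (-ζ) *
          (2 * (1 + K * 4 ^ (3 / 2 + ζ)) * (1 - exp (-(τ / D ^ 2)))) := by
        gcongr
        nlinarith
      _ = _ := by ring
  · have h1 := rpow_half_mul_rpow_le_of_ge hζ hD (mul_pos hr hs).le hτ hle
    have hv : 0 < τ / D ^ 2 := by positivity
    have h3 := half_le_one_sub_exp_neg (u := τ / D ^ 2) hv.le ((div_le_one (by positivity)).2 hle)
    set v := τ / D ^ 2 with hvdef
    have e : -D ^ 2 / (4 * τ) = -(1 / (4 * v)) := by rw [hvdef]; field_simp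
    have h4 : v ^ (-(1 / 2 + ζ)) * exp (-(1 / (4 * v))) ≤ K * 4 ^ (3 / 2 + ζ) * v := by
      have h5 := h (1 / (4 * v)) (by positivity)
      rw [one_div, inv_rpow (by positivity), mul_rpow (by norm_num) hv.le] at h5
      have e1 : v ^ (-(1 / 2 + ζ)) = v * (v ^ (3 / 2 + ζ))⁻¹ := by
        rw [← rpow_neg hv.le]
        nth_rw 2 [← rpow_one v]
        rw [← rpow_add hv]
        congr 1; ring
      rw [e1, exp_neg, one_div]
      have h6 : (v ^ (3 / 2 + ζ))⁻¹ ≤ K * 4 ^ (3 / 2 + ζ) * exp (4 * v)⁻¹ := by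
        calc (v ^ (3 / 2 + ζ))⁻¹ = 4 ^ (3 / 2 + ζ) * (4 ^ (3 / 2 + ζ) * v ^ (3 / 2 + ζ))⁻¹ := by
              field_simp
          _ ≤ 4 ^ (3 / 2 + ζ) * (K * exp (4 * v)⁻¹) := by gcongr
          _ = _ := by ring
      rw [← div_eq_mul_inv _ (exp _), div_le_iff₀ (exp_pos _)]
      calc _ ≤ v * (K * 4 ^ (3 / 2 + ζ) * exp (4 * v)⁻¹) := by gcongr
        _ = _ := by ring
    rw [e]
    calc _ ≤ D⁻¹ * (D ^ 2 + r * s) ^ (-ζ) * v ^ (-(1 / 2 + ζ)) * exp (-(1 / (4 * v))) := by gcongr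
      _ = D⁻¹ * (D ^ 2 + r * s) ^ (-ζ) * (v ^ (-(1 / 2 + ζ)) * exp (-(1 / (4 * v)))) := by ring
      _ ≤ D⁻¹ * (D ^ 2 + r * s) ^ (-ζ) *
          (2 * (1 + K * 4 ^ (3 / 2 + ζ)) * (1 - exp (-v))) := by
        refine mul_le_mul_of_nonneg_left (h4.trans ?_) hA
        nlinarith
      _ = _ := by ring

theorem heatProfile_le_one_add {ζ r s τ a : ℝ} (hζ : 0 ≤ ζ) (hr : 0 < r) (hs : 0 < s)
    (hτ : 0 < τ) (ha : 0 < a) :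
    heatProfile ζ r s τ ≤
      a⁻¹ * (a ^ 2 + r * s) ^ (-ζ) * (1 + (a ^ 2) ^ (1 / 2 + ζ) * τ ^ (-(1 / 2 + ζ))) := by
  unfold heatProfile
  have h2 : exp (-(r - s) ^ 2 / (4 * τ)) ≤ 1 := by
    rw [exp_le_one_iff, neg_div, neg_nonpos]
    positivity
  refine (mul_le_of_le_one_right (by positivity) h2).trans ?_
  have h0 : 0 ≤ (a ^ 2) ^ (1 / 2 + ζ) * τ ^ (-(1 / 2 + ζ)) := by positivity
  rcases le_total (a ^ 2) τ with hle | hle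
  · refine (rpow_half_mul_rpow_le_of_le hζ ha (mul_pos hr hs).le hle).trans ?_
    exact le_mul_of_one_le_right (by positivity) (by linarith)
  · refine (rpow_half_mul_rpow_le_of_ge hζ ha (mul_pos hr hs).le hτ hle).trans ?_
    gcongr
    rw [div_rpow hτ.le (by positivity), rpow_neg (by positivity : 0 ≤ a ^ 2), div_inv_eq_mul]
    linarith

theorem le_stableProfile {ζ α t r s X : ℝ} (hζ : 0 ≤ ζ) (hα0 : 0 < α) (ht : 0 < t) (hr : 0 < r)
    (hs : 0 < s) (hX : 0 < X) (h1 : t ^ (1 / α) + |r - s| ≤ 2 * X)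
    (h2 : (t ^ (1 / α) + r + s) ^ 2 ≤ 16 * (X ^ 2 + r * s)) :
    t * X ^ (-(1 + α)) * (X ^ 2 + r * s) ^ (-ζ) ≤
      2 ^ (1 + α) * 16 ^ ζ * stableProfile ζ α t r s := by
  unfold stableProfile
  rw [rpow_neg_two_mul_eq (by positivity)]
  have e1 := rpow_neg_le_of_le_mul hX (by positivity) two_pos (by linarith : 0 ≤ 1 + α) h1
  have e2 := rpow_neg_le_of_le_mul (by positivity) (by positivity) (by norm_num) hζ h2
  calc _ ≤ t * (2 ^ (1 + α) * (t ^ (1 / α) + |r - s|) ^ (-(1 + α))) *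
        (16 ^ ζ * ((t ^ (1 / α) + r + s) ^ 2) ^ (-ζ)) := by gcongr
    _ = _ := by ring

theorem stableProfile_upper {ζ α : ℝ} (hζ : 0 ≤ ζ) (hα0 : 0 < α) :
    ∃ C : ℝ, 0 < C ∧ ∀ (t r s : ℝ) (μ : Measure ℝ), IsStableLaw (α / 2) t μ → 0 < t → 0 < r →
      0 < s → Integrable (heatProfile ζ r s) μ ∧
      ∫ τ, heatProfile ζ r s τ ∂μ ≤ C * stableProfile ζ α t r s := by
  obtain ⟨K, hK, h⟩ := heatProfile_le_one_sub_exp hζ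
  have hζ2 : 0 < 1 / 2 + ζ := by linarith
  set M := 1 / (α / 2) * Gamma ((1 / 2 + ζ) / (α / 2)) / Gamma (1 / 2 + ζ) with hM
  have hM0 : 0 < M := by
    have := Gamma_pos_of_pos hζ2
    have := Gamma_pos_of_pos (div_pos hζ2 (half_pos hα0))
    positivity
  refine ⟨(K + 1 + M) * (2 ^ (1 + α) * 16 ^ ζ), by positivity, fun t r s μ hμ ht hr hs => ?_⟩
  have := hμ.prob
  have hprof : 0 ≤ stableProfile ζ α t r s := by unfold stableProfile; positivity
  have hnn : ∀ᵐ τ ∂μ, 0 ≤ heatProfile ζ r s τ := by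
    filter_upwards [hμ.pos] with τ hτ
    unfold heatProfile
    positivity
  have hDrs : |r - s| ≤ r + s := abs_le.2 ⟨by linarith, by linarith⟩
  have hsq := sq_abs (r - s)
  set a := t ^ (1 / α) with ha
  have ha0 : 0 < a := by positivity
  -- it suffices to dominate the profile by an integrable function
  have hdom : ∀ (g : ℝ → ℝ) (L : ℝ), Integrable g μ → (∀ᵐ τ ∂μ, heatProfile ζ r s τ ≤ g τ) →
      0 ≤ L → L ≤ K + 1 + M → ∫ τ, g τ ∂μ ≤ L * (2 ^ (1 + α) * 16 ^ ζ * stableProfile ζ α t r s) →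
      Integrable (heatProfile ζ r s) μ ∧ ∫ τ, heatProfile ζ r s τ ∂μ ≤
        (K + 1 + M) * (2 ^ (1 + α) * 16 ^ ζ) * stableProfile ζ α t r s := by
    intro g L hg hle hL0 hL hgL
    have hi : Integrable (heatProfile ζ r s) μ := by
      refine hg.mono' (measurable_heatProfile ζ r s).aestronglyMeasurable ?_
      filter_upwards [hle, hnn] with τ h1 h2
      rwa [norm_of_nonneg h2]
    refine ⟨hi, (integral_mono_ae hi hg hle).trans (hgL.trans ?_)⟩
    rw [mul_assoc (K + 1 + M)]
    gcongr
  rcases le_total a |r - s| with hcase | hcase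
  · have hD : 0 < |r - s| := ha0.trans_le hcase
    set A := |r - s|⁻¹ * (|r - s| ^ 2 + r * s) ^ (-ζ) with hA
    have hA0 : 0 ≤ A := by positivity
    refine hdom (fun τ => K * A * (1 - exp (-τ * (|r - s| ^ 2)⁻¹))) K
      ((hμ.integrable_one_sub_exp (by positivity)).const_mul _) ?_ hK.le (by linarith) ?_
    · filter_upwards [hμ.pos] with τ hτ using h r s τ hr hs hτ hD
    · rw [integral_const_mul, mul_assoc]
      refine mul_le_mul_of_nonneg_left ?_ hK.le
      refine (mul_le_mul_of_nonneg_left (hμ.integral_one_sub_exp_le (pow_pos hD 2)) hA0).trans ?_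
      refine le_trans (le_of_eq ?_) (le_stableProfile hζ hα0 ht hr hs hD (by linarith) ?_)
      · rw [← rpow_neg_two_mul_eq hD.le, hA, neg_add, rpow_add hD, rpow_neg_one,
          mul_div_cancel₀ α two_ne_zero]
        ring
      · nlinarith [mul_pos hr hs, sq_nonneg (r - s)]
  · set A := a⁻¹ * (a ^ 2 + r * s) ^ (-ζ) with hA
    have hA0 : 0 ≤ A := by positivity
    obtain ⟨hi, hv⟩ := hμ.integrable_rpow_neg (half_pos hα0) ht hζ2
    have hi' := hi.const_mul ((a ^ 2) ^ (1 / 2 + ζ))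
    refine hdom (fun τ => A * (1 + (a ^ 2) ^ (1 / 2 + ζ) * τ ^ (-(1 / 2 + ζ)))) (1 + M)
      (((integrable_const 1).add hi').const_mul A) ?_ (by linarith) (by linarith) ?_
    · filter_upwards [hμ.pos] with τ hτ using heatProfile_le_one_add hζ hr hs hτ ha0
    · have hscale : (a ^ 2) ^ (1 / 2 + ζ) * t ^ (-(1 / 2 + ζ) / (α / 2)) = 1 := by
        rw [ha, ← rpow_natCast, ← rpow_mul ht.le, ← rpow_mul ht.le, ← rpow_add ht]
        rw [show 1 / α * ((2 : ℕ) : ℝ) * (1 / 2 + ζ) + -(1 / 2 + ζ) / (α / 2) = 0 by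
          push_cast; field_simp; ring, rpow_zero]
      have hint : ∫ τ, A * (1 + (a ^ 2) ^ (1 / 2 + ζ) * τ ^ (-(1 / 2 + ζ))) ∂μ = (1 + M) * A := by
        rw [integral_const_mul, integral_add (integrable_const 1) hi', integral_const_mul, hv]
        simp only [integral_const, probReal_univ, smul_eq_mul, mul_one]
        rw [hM]
        linear_combination A * (1 / (α / 2) * Gamma ((1 / 2 + ζ) / (α / 2)) /
          Gamma (1 / 2 + ζ)) * hscale
      rw [hint]
      gcongr
      refine le_trans (le_of_eq ?_) (le_stableProfile hζ hα0 ht hr hs ha0 (by linarith) ?_)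
      · have haα : t * a ^ (-α) = 1 := by
          rw [ha, ← rpow_mul ht.le]
          nth_rw 1 [← rpow_one t]
          rw [← rpow_add ht]
          simp [hα0.ne']
        rw [hA, neg_add, rpow_add ha0, rpow_neg_one]
        linear_combination -a⁻¹ * (a ^ 2 + r * s) ^ (-ζ) * haα
      · have : |r - s| ^ 2 ≤ a ^ 2 := pow_le_pow_left₀ (abs_nonneg _) hcase 2
        nlinarith [mul_pos hr hs, sq_nonneg (a - r - s)]

theorem stableProfile_comm (ζ α t r s : ℝ) :
    stableProfile ζ α t r s = stableProfile ζ α t s r := by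
  unfold stableProfile
  rw [abs_sub_comm, add_right_comm]

theorem div_rpow_mul_rpow_neg_le {x y v w p : ℝ} (hx : 0 < x) (hy : 0 < y) (hv : 0 < v)
    (hw : 0 < w) (hp : 0 ≤ p) (h : x * w ≤ y * v) : (x / y) ^ p * v ^ (-p) ≤ w ^ (-p) := by
  have h1 : (x / y) ^ p ≤ (v / w) ^ p := by
    refine rpow_le_rpow (by positivity) ?_ hp
    rw [div_le_div_iff₀ hy hw]
    linarith
  calc (x / y) ^ p * v ^ (-p) ≤ (v / w) ^ p * v ^ (-p) := by gcongr
    _ = w ^ (-p) := by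
      rw [div_rpow hv.le hw.le, rpow_neg hv.le, rpow_neg hw.le]
      field_simp

theorem weighted_stableProfile_le {ζ α r s z t T w K : ℝ} (hζ : 0 ≤ ζ) (hα0 : 0 < α)
    (hr : 0 < r) (hs : 0 < s) (hz : 0 < z) (ht : 0 < t) (hw : 0 < w) (hK : 0 < K) (htT : t ≤ T)
    (h1 : T ^ (1 / α) + |r - s| ≤ K * (t ^ (1 / α) + |r - z|))
    (h2 : T ^ (1 / α) + r + s ≤ K * w)
    (h3 : (r + z) * w ≤ (r + s + z) * (t ^ (1 / α) + r + z)) :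
    ((r + z) / (r + s + z)) ^ (2 * ζ) * stableProfile ζ α t r z ≤
      K ^ (1 + α) * K ^ (2 * ζ) * stableProfile ζ α T r s := by
  have hT : 0 < T := ht.trans_le htT
  unfold stableProfile
  have e1 := rpow_neg_le_of_le_mul (p := 1 + α) (by positivity) (by positivity) hK
    (by linarith) h1
  have e2 := rpow_neg_le_of_le_mul (p := 2 * ζ) hw (by positivity) hK (by linarith) h2
  have e3 := div_rpow_mul_rpow_neg_le (p := 2 * ζ) (by positivity) (by positivity)
    (by positivity) hw (by linarith) h3
  calc _ = t * (t ^ (1 / α) + |r - z|) ^ (-(1 + α)) *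
        (((r + z) / (r + s + z)) ^ (2 * ζ) * (t ^ (1 / α) + r + z) ^ (-(2 * ζ))) := by ring
    _ ≤ T * (K ^ (1 + α) * (T ^ (1 / α) + |r - s|) ^ (-(1 + α))) *
        (K ^ (2 * ζ) * (T ^ (1 / α) + r + s) ^ (-(2 * ζ))) := by
      have e4 := e3.trans e2
      gcongr
    _ = _ := by ring

theorem min_weighted_stableProfile_le_of_le {ζ α r s z t τ : ℝ} (hζ : 0 ≤ ζ) (hα0 : 0 < α)
    (hr : 0 < r) (hs : 0 < s) (hz : 0 < z) (ht : 0 < t) (htτ : t ≤ τ) :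
    min (((r + z) / (r + s + z)) ^ (2 * ζ) * stableProfile ζ α t r z)
        (((s + z) / (r + s + z)) ^ (2 * ζ) * stableProfile ζ α τ z s) ≤
      (2 * 2 ^ (1 / α) + 2) ^ (1 + α) * (2 * 2 ^ (1 / α) + 2) ^ (2 * ζ) *
        stableProfile ζ α (t + τ) r s := by
  have hτ : 0 < τ := ht.trans_le htτ
  have hκ : (1 : ℝ) ≤ 2 ^ (1 / α) := one_le_rpow (by norm_num) (by positivity)
  have hc : (t + τ) ^ (1 / α) ≤ 2 ^ (1 / α) * τ ^ (1 / α) := by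
    rw [← mul_rpow (by norm_num) hτ.le]
    exact rpow_le_rpow (by positivity) (by linarith) (by positivity)
  have hb : 0 < τ ^ (1 / α) := by positivity
  have ha : 0 < t ^ (1 / α) := by positivity
  have htri : |r - s| ≤ |r - z| + |s - z| := by
    rw [abs_sub_comm s z]
    exact abs_sub_le r z s
  have h0 := abs_nonneg (r - s)
  have hz0 := abs_nonneg (s - z)
  by_cases hcase : |r - s| ≤ τ ^ (1 / α) ∨ |r - s| ≤ 2 * |s - z|
  · refine (min_le_right _ _).trans ?_
    rw [stableProfile_comm ζ α τ, stableProfile_comm ζ α (t + τ), add_comm r s]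
    refine weighted_stableProfile_le (w := τ ^ (1 / α) + s + r) hζ hα0 hs hr hz hτ (by positivity)
      (by positivity) (by linarith) ?_ ?_ ?_
    · rw [abs_sub_comm s r]
      rcases hcase with h | h <;> nlinarith
    · nlinarith
    · nlinarith [mul_pos hb hr, mul_pos hr hz, mul_pos hr hs]
  · push Not at hcase
    have hrs : |r - s| ≤ r + s := abs_le.2 ⟨by linarith, by linarith⟩
    refine (min_le_left _ _).trans ?_
    refine weighted_stableProfile_le (w := r + s) hζ hα0 hr hs hz ht (by positivity)
      (by positivity) (by linarith) ?_ ?_ ?_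
    · nlinarith
    · nlinarith
    · nlinarith [mul_pos ha hr, mul_pos ha hs, mul_pos ha hz, mul_pos hr hz, mul_pos hz hz]

theorem min_weighted_stableProfile_le {ζ α r s z t τ : ℝ} (hζ : 0 ≤ ζ) (hα0 : 0 < α)
    (hr : 0 < r) (hs : 0 < s) (hz : 0 < z) (ht : 0 < t) (hτ : 0 < τ) :
    min (((r + z) / (r + s + z)) ^ (2 * ζ) * stableProfile ζ α t r z)
        (((s + z) / (r + s + z)) ^ (2 * ζ) * stableProfile ζ α τ z s) ≤
      (2 * 2 ^ (1 / α) + 2) ^ (1 + α) * (2 * 2 ^ (1 / α) + 2) ^ (2 * ζ) *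
        stableProfile ζ α (t + τ) r s := by
  rcases le_total t τ with h | h
  · exact min_weighted_stableProfile_le_of_le hζ hα0 hr hs hz ht h
  · have := min_weighted_stableProfile_le_of_le hζ hα0 hs hr hz hτ h
    rwa [min_comm, stableProfile_comm ζ α τ, stableProfile_comm ζ α t,
      stableProfile_comm ζ α (τ + t), add_comm s r, add_comm τ t] at this

theorem aemeasurable_besselHeat {ζ r s : ℝ} (hζ : 0 ≤ ζ) (hr : 0 < r) (hs : 0 < s)
    {μ : Measure ℝ} (hμ : ∀ᵐ τ ∂μ, 0 < τ) : AEMeasurable (fun τ => besselHeat ζ τ r s) μ := by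
  unfold besselHeat
  refine AEMeasurable.mul (by fun_prop) ?_
  refine aemeasurable_of_tendsto_metrizable_ae atTop
    (f := fun n τ => ∑ k ∈ Finset.range n, (r * s / (2 * τ) / 2) ^ (2 * (k : ℝ) + (ζ - 1 / 2)) /
      ((Nat.factorial k : ℝ) * Gamma ((k : ℝ) + (ζ - 1 / 2) + 1))) ?_ ?_
  · intro n
    fun_prop
  · filter_upwards [hμ] with τ hτ
    have hx : 0 < r * s / (2 * τ) := by positivity
    refine (Summable.hasSum ?_).tendsto_sum_nat
    simp_rw [besselI_term_eq hx]
    exact (summable_besselI_term hζ hx).mul_left _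

theorem isStableLaw_withDensity {α t : ℝ} {σ : ℝ → ℝ → ℝ} (hα0 : 0 < α)
    (hσ : IsStableSubordinatorDensity α σ) (ht : 0 < t) :
    IsStableLaw (α / 2) t
      ((volume.restrict (Ioi 0)).withDensity fun τ => ENNReal.ofReal (σ t τ)) := by
  obtain ⟨h0, hm, hl⟩ := hσ
  have hnn : 0 ≤ᵐ[volume.restrict (Ioi 0)] σ t := by
    filter_upwards [ae_restrict_mem measurableSet_Ioi] with τ hτ using h0 t ht τ hτ
  have htot : ∫ τ in Ioi (0 : ℝ), σ t τ = 1 := by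
    simpa [zero_rpow (half_pos hα0).ne'] using hl t 0 ht le_rfl
  have hint : Integrable (σ t) (volume.restrict (Ioi 0)) := by
    by_contra h
    rw [integral_undef h] at htot
    exact zero_ne_one htot
  refine ⟨⟨?_⟩, ?_, fun l hl0 => ?_⟩
  · rw [withDensity_apply _ MeasurableSet.univ, Measure.restrict_univ,
      ← ofReal_integral_eq_lintegral_ofReal hint hnn, htot, ENNReal.ofReal_one]
  · exact withDensity_absolutelyContinuous _ _ (ae_restrict_mem measurableSet_Ioi)
  · rw [← hl t l ht hl0, integral_withDensity_eq_integral_toReal_smul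
      (hm t ht).ennreal_ofReal (by simp)]
    refine integral_congr_ae ?_
    filter_upwards [hnn] with τ hτ
    rw [ENNReal.toReal_ofReal hτ, smul_eq_mul, mul_comm]

theorem subKernel_eq_integral {ζ α t r s : ℝ} {σ : ℝ → ℝ → ℝ}
    (hσ : IsStableSubordinatorDensity α σ) (ht : 0 < t) :
    subKernel ζ σ t r s = ∫ τ, besselHeat ζ τ r s
      ∂((volume.restrict (Ioi 0)).withDensity fun τ => ENNReal.ofReal (σ t τ)) := by
  rw [integral_withDensity_eq_integral_toReal_smul (hσ.2.1 t ht).ennreal_ofReal (by simp)]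
  refine setIntegral_congr_fun measurableSet_Ioi fun τ hτ => ?_
  simp only [ENNReal.toReal_ofReal (hσ.1 t ht τ hτ), smul_eq_mul, mul_comm]

theorem subKernel_bounds {ζ α : ℝ} (hζ : 0 ≤ ζ) (hα0 : 0 < α) (hα2 : α < 2)
    {σ : ℝ → ℝ → ℝ} (hσ : IsStableSubordinatorDensity α σ) :
    ∃ c C : ℝ, 0 < c ∧ 0 < C ∧ ∀ t r s : ℝ, 0 < t → 0 < r → 0 < s →
      c * stableProfile ζ α t r s ≤ subKernel ζ σ t r s ∧
      subKernel ζ σ t r s ≤ C * stableProfile ζ α t r s := by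
  obtain ⟨c₁, C₁, hc₁, hC₁, hheat⟩ := besselHeat_bounds hζ
  obtain ⟨c₂, hc₂, hlow⟩ := stableProfile_lower hζ hα0 hα2
  obtain ⟨C₂, hC₂, hup⟩ := stableProfile_upper hζ hα0
  refine ⟨c₁ * c₂, C₁ * C₂, by positivity, by positivity, fun t r s ht hr hs => ?_⟩
  rw [subKernel_eq_integral hσ ht]
  have hμ := isStableLaw_withDensity hα0 hσ ht
  set μ := (volume.restrict (Ioi 0)).withDensity fun τ => ENNReal.ofReal (σ t τ)
  obtain ⟨hi, hub⟩ := hup t r s μ hμ ht hr hs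
  have hlb := hlow t r s μ hμ ht hr hs hi
  have hle : ∀ᵐ τ ∂μ, besselHeat ζ τ r s ≤ C₁ * heatProfile ζ r s τ := by
    filter_upwards [hμ.pos] with τ hτ using (hheat τ r s hτ hr hs).2
  have hge : ∀ᵐ τ ∂μ, c₁ * heatProfile ζ r s τ ≤ besselHeat ζ τ r s := by
    filter_upwards [hμ.pos] with τ hτ using (hheat τ r s hτ hr hs).1
  have hb : Integrable (fun τ => besselHeat ζ τ r s) μ := by
    refine (hi.const_mul C₁).mono'
      (aemeasurable_besselHeat hζ hr hs hμ.pos).aestronglyMeasurable ?_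
    filter_upwards [hle, hge, hμ.pos] with τ h1 h2 hτ
    rwa [norm_of_nonneg (le_trans (by unfold heatProfile; positivity) h2)]
  constructor
  · calc c₁ * c₂ * stableProfile ζ α t r s ≤ c₁ * ∫ τ, heatProfile ζ r s τ ∂μ := by
          rw [mul_assoc]; gcongr
      _ = ∫ τ, c₁ * heatProfile ζ r s τ ∂μ := (integral_const_mul _ _).symm
      _ ≤ _ := integral_mono_ae (hi.const_mul c₁) hb hge
  · calc ∫ τ, besselHeat ζ τ r s ∂μ ≤ ∫ τ, C₁ * heatProfile ζ r s τ ∂μ :=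
          integral_mono_ae hb (hi.const_mul C₁) hle
      _ = C₁ * ∫ τ, heatProfile ζ r s τ ∂μ := integral_const_mul _ _
      _ ≤ _ := by rw [mul_assoc]; gcongr

theorem stmt11 (ζ α : ℝ) (hζ : 0 ≤ ζ) (hα0 : 0 < α) (hα2 : α < 2)
    (σ : ℝ → ℝ → ℝ) (hσ : IsStableSubordinatorDensity α σ) :
    ∃ C : ℝ, 0 < C ∧
      ∀ r s z t τ : ℝ, 0 < r → 0 < s → 0 < z → 0 < t → 0 < τ →
        min (((r + z) / (r + s + z)) ^ (2 * ζ) * subKernel ζ σ t r z)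
            (((s + z) / (r + s + z)) ^ (2 * ζ) * subKernel ζ σ τ z s)
          ≤ C * subKernel ζ σ (t + τ) r s := by
  obtain ⟨c, C, hc, hC, h⟩ := subKernel_bounds hζ hα0 hα2 hσ
  set K : ℝ := (2 * 2 ^ (1 / α) + 2) ^ (1 + α) * (2 * 2 ^ (1 / α) + 2) ^ (2 * ζ) with hK
  have hK0 : 0 < K := by positivity
  refine ⟨C * K / c, by positivity, fun r s z t τ hr hs hz ht hτ => ?_⟩
  calc _ ≤ min (((r + z) / (r + s + z)) ^ (2 * ζ) * (C * stableProfile ζ α t r z))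
        (((s + z) / (r + s + z)) ^ (2 * ζ) * (C * stableProfile ζ α τ z s)) := by
        have h1 := (h t r z ht hr hz).2
        have h2 := (h τ z s hτ hz hs).2
        gcongr
    _ = C * min (((r + z) / (r + s + z)) ^ (2 * ζ) * stableProfile ζ α t r z)
        (((s + z) / (r + s + z)) ^ (2 * ζ) * stableProfile ζ α τ z s) := by
        rw [mul_left_comm _ C, mul_left_comm _ C, mul_min_of_nonneg _ _ hC.le]
    _ ≤ C * (K * stableProfile ζ α (t + τ) r s) := by
        have h3 := min_weighted_stableProfile_le hζ hα0 hr hs hz ht hτ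
        gcongr
    _ = C * K / c * (c * stableProfile ζ α (t + τ) r s) := by field_simp
    _ ≤ _ := by
        have h4 := (h (t + τ) r s (by positivity) hr hs).1
        gcongr
end
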